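/- The following reduction formula holds: F_C^{(3)}(1, 1/2; 1, 1, 1; 1/9, 1/9, 1/9) = (√6/(32π³)) Γ(1/24) Γ(5/24) Γ(7/24) Γ(11/24), i.e. ∑_{k₁≥0} ∑_{k₂≥0} ∑_{k₃≥0} (1)_{k₁+k₂+k₃} (1/2)_{k₁+k₂+k₃} / ((k₁)!² (k₂)!² (k₃)!² · 9^{k₁+k₂+k₃}) = (√6/(32π³)) Γ(1/24) Γ(5/24) Γ(7/24) Γ(11/24). -/

import Mathlib

open Real Finset

/-- The numbers `∑ₖ C(n,k)² C(2k,k)`, i.e. the constant terms of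
`((x + y + z)(1/x + 1/y + 1/z))ⁿ`. -/
noncomputable def honeycomb (n : ℕ) : ℝ :=
  ∑ k ∈ range (n + 1), (n.choose k : ℝ) ^ 2 * (Nat.centralBinom k : ℝ)

theorem honeycomb_eq_sum_range {n m : ℕ} (h : n + 1 ≤ m) :
    honeycomb n = ∑ k ∈ range m, (n.choose k : ℝ) ^ 2 * (Nat.centralBinom k : ℝ) := by
  refine Finset.sum_subset (Finset.range_mono h) fun k _ hk => ?_
  rw [Nat.choose_eq_zero_of_lt (by simpa using hk)]
  simp

theorem cast_choose_mul_succ (n k : ℕ) :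
    (n.choose k : ℝ) * (n + 1) = ((n + 1).choose k : ℝ) * (n + 1 - k) := by
  rcases le_or_gt k (n + 1) with h | h
  · have := Nat.choose_mul_succ_eq n k
    have h2 : (((n + 1 - k : ℕ)) : ℝ) = n + 1 - k := by push_cast [Nat.cast_sub h]; ring
    rw [← h2]; exact_mod_cast this
  · rw [Nat.choose_eq_zero_of_lt h, Nat.choose_eq_zero_of_lt (by omega)]; simp

theorem cast_choose_succ_right (n k : ℕ) :
    (n.choose (k + 1) : ℝ) * (k + 1) = (n.choose k : ℝ) * (n - k) := by
  rcases le_or_gt k n with h | h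
  · have := Nat.choose_succ_right_eq n k
    rw [← Nat.cast_sub h]; exact_mod_cast this
  · rw [Nat.choose_eq_zero_of_lt h, Nat.choose_eq_zero_of_lt (by omega)]; simp

theorem cast_centralBinom_succ (k : ℕ) :
    ((k : ℝ) + 1) * (Nat.centralBinom (k + 1) : ℝ) =
      2 * (2 * k + 1) * (Nat.centralBinom k : ℝ) := by
  exact_mod_cast Nat.succ_mul_centralBinom_succ k

theorem honeycomb_telescoping (n k : ℕ) :
    ((n : ℝ) + 2) ^ 2 * (((n + 2).choose k : ℝ) ^ 2 * (Nat.centralBinom k : ℝ))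
      - (10 * ((n : ℝ) + 1) ^ 2 + 10 * (n + 1) + 3) *
          (((n + 1).choose k : ℝ) ^ 2 * (Nat.centralBinom k : ℝ))
      + 9 * ((n : ℝ) + 1) ^ 2 * ((n.choose k : ℝ) ^ 2 * (Nat.centralBinom k : ℝ)) =
    ((k + 1 : ℕ) : ℝ) ^ 3 * (3 * ((k + 1 : ℕ) : ℝ) - 4 * (n + 2)) *
        (((n + 2).choose (k + 1) : ℝ) ^ 2 * (Nat.centralBinom (k + 1) : ℝ)) / (n + 2) ^ 2
      - (k : ℝ) ^ 3 * (3 * k - 4 * (n + 2)) *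
        (((n + 2).choose k : ℝ) ^ 2 * (Nat.centralBinom k : ℝ)) / (n + 2) ^ 2 := by
  have hn1 : (n : ℝ) + 1 ≠ 0 := by positivity
  have hn2 : (n : ℝ) + 2 ≠ 0 := by positivity
  have hk1 : (k : ℝ) + 1 ≠ 0 := by positivity
  have e1 := cast_choose_mul_succ n k
  have e2 := cast_choose_mul_succ (n + 1) k
  have e3 := cast_choose_succ_right (n + 2) k
  have e4 := cast_centralBinom_succ k
  push_cast at e1 e2 e3 ⊢
  set c := ((n + 2).choose k : ℝ)
  rw [← eq_div_iff hn1] at e1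
  have e2' : ((n + 1).choose k : ℝ) = c * (n + 2 - k) / (n + 2) := by
    rw [eq_div_iff hn2]; linear_combination e2
  rw [← eq_div_iff hk1] at e3
  have e4' : (Nat.centralBinom (k + 1) : ℝ) =
      2 * (2 * k + 1) * (Nat.centralBinom k : ℝ) / (k + 1) := by
    rw [eq_div_iff hk1]; linear_combination e4
  rw [e1, e2', e3, e4']
  field_simp
  ring

theorem honeycomb_recurrence (n : ℕ) :
    ((n : ℝ) + 2) ^ 2 * honeycomb (n + 2) =
      (10 * ((n : ℝ) + 1) ^ 2 + 10 * (n + 1) + 3) * honeycomb (n + 1)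
        - 9 * ((n : ℝ) + 1) ^ 2 * honeycomb n := by
  have h := Finset.sum_congr rfl fun k (_ : k ∈ range (n + 3)) => honeycomb_telescoping n k
  rw [Finset.sum_range_sub fun k : ℕ => (k : ℝ) ^ 3 * (3 * k - 4 * (n + 2)) *
        (((n + 2).choose k : ℝ) ^ 2 * (Nat.centralBinom k : ℝ)) / (n + 2) ^ 2,
    Nat.choose_eq_zero_of_lt (by omega : n + 2 < n + 3), Finset.sum_add_distrib,
    Finset.sum_sub_distrib, ← Finset.mul_sum, ← Finset.mul_sum, ← Finset.mul_sum,
    ← honeycomb_eq_sum_range (by omega : n + 2 + 1 ≤ n + 3),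
    ← honeycomb_eq_sum_range (by omega : n + 1 + 1 ≤ n + 3),
    ← honeycomb_eq_sum_range (by omega : n + 1 ≤ n + 3)] at h
  simp at h
  linarith

theorem honeycomb_zero : honeycomb 0 = 1 := by simp [honeycomb]

theorem honeycomb_one : honeycomb 1 = 3 := by
  simp [honeycomb, Finset.sum_range_succ, Nat.centralBinom_eq_two_mul_choose]; norm_num

theorem honeycomb_nonneg (n : ℕ) : 0 ≤ honeycomb n :=
  Finset.sum_nonneg fun _ _ => by positivity

theorem centralBinom_le_four_pow (k : ℕ) : Nat.centralBinom k ≤ 4 ^ k := by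
  have := Nat.choose_le_two_pow (2 * k) k
  rwa [pow_mul] at this

theorem honeycomb_le (n : ℕ) : honeycomb n ≤ 9 ^ n := by
  have h1 : ∀ k ∈ range (n + 1), (n.choose k : ℝ) ^ 2 * (Nat.centralBinom k : ℝ) ≤
      ((n.choose k : ℝ) * 2 ^ k) ^ 2 := fun k _ => by
    have : (Nat.centralBinom k : ℝ) ≤ 4 ^ k := by exact_mod_cast centralBinom_le_four_pow k
    calc _ ≤ (n.choose k : ℝ) ^ 2 * 4 ^ k := by gcongr
      _ = _ := by rw [mul_pow, ← pow_mul, mul_comm k 2, pow_mul]; norm_num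
  have h3 : ∑ k ∈ range (n + 1), (n.choose k : ℝ) * 2 ^ k = 3 ^ n := by
    have := add_pow (2 : ℝ) 1 n
    norm_num at this
    rw [this]; exact Finset.sum_congr rfl fun k _ => mul_comm _ _
  calc honeycomb n ≤ ∑ k ∈ range (n + 1), ((n.choose k : ℝ) * 2 ^ k) ^ 2 := Finset.sum_le_sum h1
    _ ≤ (∑ k ∈ range (n + 1), (n.choose k : ℝ) * 2 ^ k) ^ 2 :=
        Finset.sum_sq_le_sq_sum_of_nonneg fun _ _ => by positivity
    _ = 9 ^ n := by rw [h3, ← pow_mul, mul_comm, pow_mul]; norm_num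

theorem ascPochhammer_eval_half (n : ℕ) :
    (ascPochhammer ℝ n).eval (1 / 2) = n.factorial * (Nat.centralBinom n : ℝ) / 4 ^ n := by
  induction n with
  | zero => simp
  | succ n ih =>
    have h := cast_centralBinom_succ n
    rw [ascPochhammer_succ_eval, ih, Nat.factorial_succ, pow_succ]
    push_cast
    field_simp
    linear_combination (-2 : ℝ) * h

theorem sum_multinomial_sq (n : ℕ) :
    ∑ k ∈ Finset.Nat.antidiagonalTuple 3 n,
      ((n.factorial : ℝ) / ∏ j, ((k j).factorial : ℝ)) ^ 2 = honeycomb n := by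
  have key : ∑ p ∈ (range (n + 1)).sigma fun m => range (m + 1),
      ((n.choose p.1 : ℝ) * (p.1.choose p.2 : ℝ)) ^ 2 = honeycomb n := by
    rw [Finset.sum_sigma, honeycomb]
    refine Finset.sum_congr rfl fun m _ => ?_
    have := Nat.sum_range_choose_sq m
    rw [← Nat.centralBinom_eq_two_mul_choose] at this
    simp only [mul_pow]
    rw [← Finset.mul_sum, ← this]
    push_cast
    rfl
  rw [← key]
  refine Finset.sum_bij' (fun k _ => ⟨k 0 + k 1, k 0⟩)
    (fun p _ => ![p.2, p.1 - p.2, n - p.1]) ?_ ?_ ?_ ?_ ?_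
  · intro k hk
    rw [Finset.Nat.mem_antidiagonalTuple, Fin.sum_univ_three] at hk
    simp only [Finset.mem_sigma, Finset.mem_range]; omega
  · rintro ⟨m, j⟩ hp
    simp only [Finset.mem_sigma, Finset.mem_range] at hp
    simp [Finset.Nat.mem_antidiagonalTuple, Fin.sum_univ_three]; omega
  · intro k hk
    rw [Finset.Nat.mem_antidiagonalTuple, Fin.sum_univ_three] at hk
    ext i; fin_cases i <;> simp; omega
  · rintro ⟨m, j⟩ hp
    simp only [Finset.mem_sigma, Finset.mem_range] at hp
    have : j + (m - j) = m := by omega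
    simp [this]
  · intro k hk
    rw [Finset.Nat.mem_antidiagonalTuple, Fin.sum_univ_three] at hk
    have h1 := Nat.add_choose_mul_factorial_mul_factorial (k 0) (k 1)
    have h2 := Nat.add_choose_mul_factorial_mul_factorial (k 0 + k 1) (k 2)
    rw [← Nat.choose_symm_add] at h1 h2
    rw [hk] at h2
    rw [Fin.prod_univ_three]
    congr 1
    rw [div_eq_iff (by positivity)]
    dsimp only
    rw [← h2, ← h1]
    push_cast
    ring

theorem lauricella_term (k : Fin 3 → ℕ) (n : ℕ) (hk : ∑ j, k j = n) :
    (ascPochhammer ℝ (∑ j, k j)).eval 1 * (ascPochhammer ℝ (∑ j, k j)).eval (1 / 2) /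
          ((∏ j, ((k j).factorial : ℝ) ^ 2) * (9 : ℝ) ^ (∑ j, k j)) =
      (Nat.centralBinom n : ℝ) * (1 / 36) ^ n *
        ((n.factorial : ℝ) / ∏ j, ((k j).factorial : ℝ)) ^ 2 := by
  rw [hk, ascPochhammer_eval_one, ascPochhammer_eval_half, Finset.prod_pow,
    show (1 / 36 : ℝ) = 1 / (4 * 9) by norm_num, div_pow, div_pow, one_pow, mul_pow]
  field_simp

theorem tsum_lauricella_eq (h : Summable fun n : ℕ =>
      (Nat.centralBinom n : ℝ) * honeycomb n * (1 / 36) ^ n) :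
    (∑' k : Fin 3 → ℕ,
        (ascPochhammer ℝ (∑ j, k j)).eval 1 * (ascPochhammer ℝ (∑ j, k j)).eval (1 / 2) /
          ((∏ j, ((k j).factorial : ℝ) ^ 2) * (9 : ℝ) ^ (∑ j, k j))) =
      ∑' n : ℕ, (Nat.centralBinom n : ℝ) * honeycomb n * (1 / 36) ^ n := by
  set F : (Fin 3 → ℕ) → ℝ := fun k =>
    (ascPochhammer ℝ (∑ j, k j)).eval 1 * (ascPochhammer ℝ (∑ j, k j)).eval (1 / 2) /
          ((∏ j, ((k j).factorial : ℝ) ^ 2) * (9 : ℝ) ^ (∑ j, k j)) with hF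
  have hfib : ∀ n : ℕ, ∑' k : Finset.Nat.antidiagonalTuple 3 n, F k =
      (Nat.centralBinom n : ℝ) * honeycomb n * (1 / 36) ^ n := fun n => by
    rw [Finset.tsum_subtype, ← sum_multinomial_sq, mul_right_comm, Finset.mul_sum]
    exact Finset.sum_congr rfl fun k hk =>
      lauricella_term k n (Finset.Nat.mem_antidiagonalTuple.1 hk)
  have hnn : ∀ k, 0 ≤ F k := fun k => by
    rw [hF]; dsimp only; rw [lauricella_term k _ rfl]; positivity
  have hs : Summable fun p : Σ n, Finset.Nat.antidiagonalTuple 3 n => F p.2 := by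
    refine (summable_sigma_of_nonneg fun p => hnn _).2 ⟨fun n => Summable.of_finite, ?_⟩
    simpa only [hfib] using h
  rw [← (Finset.Nat.sigmaAntidiagonalTupleEquivTuple 3).tsum_eq]
  simp only [← hfib]
  exact hs.tsum_sigma

/-- The sum of the real power series with coefficients `c`. -/
noncomputable def powSum (c : ℕ → ℝ) (w : ℝ) : ℝ := ∑' n, c n * w ^ n

theorem powSum_zero (c : ℕ → ℝ) : powSum c 0 = c 0 := by
  rw [powSum, tsum_eq_single 0 fun n hn => by simp [hn]]
  simp

/-- The coefficients `c` satisfy Cauchy bounds on every disc of radius less than `R`. -/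
def CauchyBounded (R : ℝ) (c : ℕ → ℝ) : Prop :=
  ∀ r, 0 ≤ r → r < R → ∃ C, ∀ n, |c n| * r ^ n ≤ C

theorem cauchyBounded_of_abs_le {A : ℝ} (hA : 0 < A) {c : ℕ → ℝ} (h : ∀ n, |c n| ≤ A ^ n) :
    CauchyBounded A⁻¹ c := fun r hr0 hr => ⟨1, fun n => by
  have h1 : A * r ≤ 1 := by
    have := mul_le_mul_of_nonneg_left hr.le hA.le
    rwa [mul_inv_cancel₀ hA.ne'] at this
  calc |c n| * r ^ n ≤ A ^ n * r ^ n := by gcongr; exact h n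
    _ = (A * r) ^ n := (mul_pow ..).symm
    _ ≤ 1 := pow_le_one₀ (by positivity) h1⟩

/-- The coefficients of `w * d/dw` applied to the power series with coefficients `c`. -/
def eulerCoeff (c : ℕ → ℝ) (n : ℕ) : ℝ := n * c n

theorem CauchyBounded.euler {R : ℝ} {c : ℕ → ℝ} (h : CauchyBounded R c) :
    CauchyBounded R (eulerCoeff c) := by
  intro r hr0 hr
  obtain ⟨s, hrs, hsR⟩ := exists_between hr
  have hs : 0 < s := hr0.trans_lt hrs
  obtain ⟨C, hC⟩ := h s hs.le hsR
  have hq : |r / s| < 1 := by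
    rw [abs_of_nonneg (by positivity), div_lt_one hs]; exact hrs
  have ht := tendsto_pow_const_mul_const_pow_of_abs_lt_one 1 hq
  obtain ⟨B, hB⟩ := ht.bddAbove_range
  have hC0 : 0 ≤ C := le_trans (by positivity) (hC 0)
  refine ⟨B * C, fun n => ?_⟩
  have hBn : (n : ℝ) ^ 1 * (r / s) ^ n ≤ B := hB ⟨n, rfl⟩
  calc |eulerCoeff c n| * r ^ n = ((n : ℝ) ^ 1 * (r / s) ^ n) * (|c n| * s ^ n) := by
        rw [eulerCoeff, abs_mul, Nat.abs_cast, div_pow]; field_simp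
    _ ≤ B * C := by
        have hB0 : 0 ≤ B := le_trans (by positivity) hBn
        exact mul_le_mul hBn (hC n) (by positivity) hB0

theorem CauchyBounded.summable_abs {R : ℝ} {c : ℕ → ℝ} (h : CauchyBounded R c) {r : ℝ}
    (hr0 : 0 ≤ r) (hr : r < R) : Summable fun n => |c n| * r ^ n := by
  obtain ⟨s, hrs, hsR⟩ := exists_between hr
  have hs : 0 < s := hr0.trans_lt hrs
  obtain ⟨C, hC⟩ := h s hs.le hsR
  refine Summable.of_nonneg_of_le (fun n => by positivity) (fun n => ?_)
    ((summable_geometric_of_lt_one (by positivity) ((div_lt_one hs).2 hrs)).mul_left C)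
  calc |c n| * r ^ n = (|c n| * s ^ n) * (r / s) ^ n := by rw [div_pow]; field_simp
    _ ≤ C * (r / s) ^ n := by gcongr; exact hC n

theorem CauchyBounded.hasSum {R : ℝ} {c : ℕ → ℝ} (h : CauchyBounded R c) {w : ℝ}
    (hw : |w| < R) : HasSum (fun n => c n * w ^ n) (powSum c w) := by
  refine (Summable.of_norm ?_).hasSum
  simpa only [norm_mul, norm_pow, Real.norm_eq_abs] using h.summable_abs (abs_nonneg w) hw

theorem CauchyBounded.analyticAt {R : ℝ} {c : ℕ → ℝ} (h : CauchyBounded R c) {w : ℝ}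
    (hw : |w| < R) : AnalyticAt ℝ (powSum c) w := by
  have hsum : powSum c = (FormalMultilinearSeries.ofScalars ℝ c).sum := by
    ext w
    rw [← FormalMultilinearSeries.ofScalarsSum, FormalMultilinearSeries.ofScalarsSum_eq_tsum]
    simp [powSum]
  obtain ⟨s, hws, hsR⟩ := exists_between hw
  have hs : 0 < s := (abs_nonneg w).trans_lt hws
  obtain ⟨C, hC⟩ := h s hs.le hsR
  lift s to NNReal using hs.le
  have hrad : (s : ENNReal) ≤ (FormalMultilinearSeries.ofScalars ℝ c).radius := by
    refine FormalMultilinearSeries.le_radius_of_bound _ C fun n => ?_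
    rw [FormalMultilinearSeries.ofScalars_norm]; exact hC n
  have hpos : (0 : ENNReal) < s := by exact_mod_cast hs
  rw [hsum]
  refine ((FormalMultilinearSeries.hasFPowerSeriesOnBall _
    (hpos.trans_le hrad)).analyticAt_of_mem ?_)
  refine Metric.eball_subset_eball hrad ?_
  rw [Metric.mem_eball, edist_dist, Real.dist_eq, sub_zero, ENNReal.ofReal_lt_iff_lt_toReal
    (abs_nonneg _) ENNReal.coe_ne_top]
  exact hws

theorem CauchyBounded.hasDerivAt {R : ℝ} {c : ℕ → ℝ} (h : CauchyBounded R c) {w : ℝ}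
    (hw0 : w ≠ 0) (hw : |w| < R) :
    HasDerivAt (powSum c) (powSum (eulerCoeff c) w / w) w := by
  obtain ⟨s, hws, hsR⟩ := exists_between hw
  have hs : 0 < s := (abs_nonneg w).trans_lt hws
  have hmem : ∀ {y : ℝ}, y ∈ Metric.ball (0 : ℝ) s → |y| < s := fun {y} hy => by
    simpa using hy
  have hd := hasDerivAt_tsum_of_isPreconnected
    (u := fun n => |eulerCoeff c n| * s ^ n * s⁻¹)
    (g := fun n y => c n * y ^ n) (g' := fun n y => c n * (n * y ^ (n - 1)))
    (t := Metric.ball 0 s) (y₀ := w) (y := w)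
    ((h.euler.summable_abs hs.le hsR).mul_right _) Metric.isOpen_ball
    (convex_ball _ _).isPreconnected
    (fun n y _ => (hasDerivAt_pow n y).const_mul (c n))
    (fun n y hy => by
      rcases n with _ | n
      · simp [eulerCoeff]
      · rw [Nat.add_sub_cancel, norm_mul, norm_mul, norm_pow, Real.norm_eq_abs, Real.norm_eq_abs,
          Real.norm_eq_abs, eulerCoeff, abs_mul, pow_succ s n]
        have : |y| ^ n ≤ s ^ n := pow_le_pow_left₀ (abs_nonneg _) (hmem hy).le _
        calc |c (n + 1)| * (|((n + 1 : ℕ) : ℝ)| * |y| ^ n)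
            ≤ |c (n + 1)| * (|((n + 1 : ℕ) : ℝ)| * s ^ n) := by gcongr
          _ = _ := by field_simp)
    (by simpa using hws) (h.hasSum hw).summable (by simpa using hws)
  refine hd.congr_deriv ?_
  rw [powSum, ← tsum_div_const]
  refine tsum_congr fun n => ?_
  rcases n with _ | n
  · simp [eulerCoeff]
  · rw [Nat.add_sub_cancel, pow_succ, eulerCoeff]; field_simp

/-- The coefficients of `w * powSum c w`. -/
def coeffShift (c : ℕ → ℝ) : ℕ → ℝ
  | 0 => 0
  | n + 1 => c n

theorem hasSum_coeffShift {c : ℕ → ℝ} {w s : ℝ} (h : HasSum (fun n => c n * w ^ n) s) :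
    HasSum (fun n => coeffShift c n * w ^ n) (w * s) := by
  rw [← hasSum_nat_add_iff' 1]
  simp only [coeffShift, Finset.range_one, Finset.sum_singleton, zero_mul, sub_zero]
  refine (h.mul_left w).congr_fun fun n => ?_
  ring

/-- The coefficients `C(2n,n) ∑ₖ C(n,k)² C(2k,k)`. -/
noncomputable def sunrise (n : ℕ) : ℝ := (Nat.centralBinom n : ℝ) * honeycomb n

theorem sunrise_nonneg (n : ℕ) : 0 ≤ sunrise n :=
  mul_nonneg (Nat.cast_nonneg _) (honeycomb_nonneg n)

theorem sunrise_recurrence (n : ℕ) :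
    ((n : ℝ) + 2) ^ 3 * sunrise (n + 2) =
      2 * (2 * n + 3) * (10 * ((n : ℝ) + 1) ^ 2 + 10 * (n + 1) + 3) * sunrise (n + 1)
        - 36 * (n + 1) * (2 * n + 1) * (2 * n + 3) * sunrise n := by
  have h := honeycomb_recurrence n
  have h1 := cast_centralBinom_succ n
  have h2 := cast_centralBinom_succ (n + 1)
  push_cast at h2
  simp only [sunrise]
  linear_combination ((n : ℝ) + 2) * (Nat.centralBinom (n + 2) : ℝ) * h
    + (((10 * ((n : ℝ) + 1) ^ 2 + 10 * (n + 1) + 3) * honeycomb (n + 1)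
        - 9 * ((n : ℝ) + 1) ^ 2 * honeycomb n)) * h2
    - 18 * (n + 1) * (2 * n + 3) * honeycomb n * h1

theorem honeycomb_cauchyBounded : CauchyBounded (1 / 9) honeycomb := by
  rw [one_div]
  exact cauchyBounded_of_abs_le (by norm_num) fun n => by
    rw [abs_of_nonneg (honeycomb_nonneg n)]; exact honeycomb_le n

theorem sunrise_cauchyBounded : CauchyBounded (1 / 36) sunrise := by
  rw [one_div]
  refine cauchyBounded_of_abs_le (by norm_num) fun n => ?_
  rw [abs_of_nonneg (sunrise_nonneg n), show (36 : ℝ) = 4 * 9 by norm_num, mul_pow]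
  have : (Nat.centralBinom n : ℝ) ≤ 4 ^ n := by exact_mod_cast centralBinom_le_four_pow n
  exact mul_le_mul this (honeycomb_le n) (honeycomb_nonneg n) (by positivity)

theorem honeycomb_ode {w : ℝ} (hw : |w| < 1 / 9) :
    (1 - 10 * w + 9 * w ^ 2) * powSum (eulerCoeff (eulerCoeff honeycomb)) w =
      (10 * w - 18 * w ^ 2) * powSum (eulerCoeff honeycomb) w
        + (3 * w - 9 * w ^ 2) * powSum honeycomb w := by
  have c0 := honeycomb_cauchyBounded
  have h0 := c0.hasSum hw
  have h1 := c0.euler.hasSum hw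
  have h2 := c0.euler.euler.hasSum hw
  have s0 := hasSum_coeffShift h0
  have s1 := hasSum_coeffShift h1
  have s2 := hasSum_coeffShift h2
  have t0 := hasSum_coeffShift s0
  have t1 := hasSum_coeffShift s1
  have t2 := hasSum_coeffShift s2
  have key := ((h2.sub ((s2.mul_left 10).add ((s1.mul_left 10).add (s0.mul_left 3)))).add
    ((t2.mul_left 9).add ((t1.mul_left 18).add (t0.mul_left 9))))
  have hz := key.unique (hasSum_zero.congr_fun fun n => ?_)
  · linear_combination hz
  · rcases n with _ | _ | n
    · simp [coeffShift, eulerCoeff]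
    · simp [coeffShift, eulerCoeff, honeycomb_zero, honeycomb_one]
    · have h := honeycomb_recurrence n
      simp only [coeffShift, eulerCoeff]
      push_cast
      linear_combination w ^ (n + 2) * h

theorem sunrise_ode {x : ℝ} (hx : |x| < 1 / 36) :
    (1 - 40 * x + 144 * x ^ 2) * powSum (eulerCoeff (eulerCoeff (eulerCoeff sunrise))) x =
      (60 * x - 432 * x ^ 2) * powSum (eulerCoeff (eulerCoeff sunrise)) x
        + (32 * x - 396 * x ^ 2) * powSum (eulerCoeff sunrise) x
        + (6 * x - 108 * x ^ 2) * powSum sunrise x := by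
  have c0 := sunrise_cauchyBounded
  have h0 := c0.hasSum hx
  have h1 := c0.euler.hasSum hx
  have h2 := c0.euler.euler.hasSum hx
  have h3 := c0.euler.euler.euler.hasSum hx
  have s0 := hasSum_coeffShift h0
  have s1 := hasSum_coeffShift h1
  have s2 := hasSum_coeffShift h2
  have s3 := hasSum_coeffShift h3
  have t0 := hasSum_coeffShift s0
  have t1 := hasSum_coeffShift s1
  have t2 := hasSum_coeffShift s2
  have t3 := hasSum_coeffShift s3
  have key := ((h3.sub ((s3.mul_left 40).add ((s2.mul_left 60).add ((s1.mul_left 32).add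
    (s0.mul_left 6))))).add ((t3.mul_left 144).add ((t2.mul_left 432).add ((t1.mul_left 396).add
    (t0.mul_left 108)))))
  have hz := key.unique (hasSum_zero.congr_fun fun n => ?_)
  · linear_combination hz
  · rcases n with _ | _ | n
    · simp [coeffShift, eulerCoeff]
    · simp [coeffShift, eulerCoeff, sunrise, honeycomb_zero, honeycomb_one,
        Nat.centralBinom_eq_two_mul_choose]
      norm_num
    · have h := sunrise_recurrence n
      simp only [coeffShift, eulerCoeff]
      push_cast
      linear_combination x ^ (n + 2) * h

theorem honeycomb_ode_deriv {w : ℝ} (hw : |w| < 1 / 9) :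
    (1 - 10 * w + 9 * w ^ 2) * powSum (eulerCoeff (eulerCoeff (eulerCoeff honeycomb))) w =
      (20 * w - 36 * w ^ 2) * powSum (eulerCoeff (eulerCoeff honeycomb)) w
        + (13 * w - 45 * w ^ 2) * powSum (eulerCoeff honeycomb) w
        + (3 * w - 18 * w ^ 2) * powSum honeycomb w := by
  have c0 := honeycomb_cauchyBounded
  have h0 := c0.hasSum hw
  have h1 := c0.euler.hasSum hw
  have h2 := c0.euler.euler.hasSum hw
  have h3 := c0.euler.euler.euler.hasSum hw
  have s0 := hasSum_coeffShift h0
  have s1 := hasSum_coeffShift h1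
  have s2 := hasSum_coeffShift h2
  have s3 := hasSum_coeffShift h3
  have t0 := hasSum_coeffShift s0
  have t1 := hasSum_coeffShift s1
  have t2 := hasSum_coeffShift s2
  have t3 := hasSum_coeffShift s3
  have key := ((h3.sub ((s3.mul_left 10).add ((s2.mul_left 20).add ((s1.mul_left 13).add
    (s0.mul_left 3))))).add ((t3.mul_left 9).add ((t2.mul_left 36).add ((t1.mul_left 45).add
    (t0.mul_left 18)))))
  have hz := key.unique (hasSum_zero.congr_fun fun n => ?_)
  · linear_combination hz
  · rcases n with _ | _ | n
    · simp [coeffShift, eulerCoeff]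
    · simp [coeffShift, eulerCoeff, honeycomb_zero, honeycomb_one]
    · have h := honeycomb_recurrence n
      simp only [coeffShift, eulerCoeff]
      push_cast
      linear_combination (n + 2) * w ^ (n + 2) * h

open Filter Topology in
/-- An analytic solution of a third order linear equation in `w * d/dw` with exponents `0, 0, 0`
at the origin vanishes identically as soon as it vanishes at the origin. -/
theorem eventually_eq_zero_of_euler_ode {D D₁ D₂ D₃ A₀ A₁ A₂ : ℝ → ℝ} {ε : ℝ} (hε : 0 < ε)
    (hD : AnalyticAt ℝ D 0) (hD0 : D 0 = 0)
    (hA₀ : ContinuousAt A₀ 0) (hA₁ : ContinuousAt A₁ 0) (hA₂ : ContinuousAt A₂ 0)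
    (hA₀0 : A₀ 0 = 0) (hA₁0 : A₁ 0 = 0) (hA₂0 : A₂ 0 = 0)
    (h₁ : ∀ w, 0 < w → w < ε → HasDerivAt D (D₁ w / w) w)
    (h₂ : ∀ w, 0 < w → w < ε → HasDerivAt D₁ (D₂ w / w) w)
    (h₃ : ∀ w, 0 < w → w < ε → HasDerivAt D₂ (D₃ w / w) w)
    (hode : ∀ w, 0 < w → w < ε → D₃ w + A₂ w * D₂ w + A₁ w * D₁ w + A₀ w * D w = 0) :
    ∀ᶠ w in 𝓝 0, D w = 0 := by
  by_contra hne
  obtain ⟨m, g, hg, hg0, hDg⟩ := hD.exists_eventuallyEq_pow_smul_nonzero_iff.2 hne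
  have hm : m ≠ 0 := by
    rintro rfl
    have := hDg.self_of_nhds
    rw [hD0] at this
    simp at this
    exact hg0 this.symm
  have step : ∀ {F F₁ p : ℝ → ℝ}, AnalyticAt ℝ p 0 →
      (∀ᶠ w in 𝓝[>] 0, F w = w ^ m * p w) →
      (∀ w, 0 < w → w < ε → HasDerivAt F (F₁ w / w) w) →
      ∃ q : ℝ → ℝ, AnalyticAt ℝ q 0 ∧ q 0 = m * p 0 ∧
        ∀ᶠ w in 𝓝[>] 0, F₁ w = w ^ m * q w := by
    intro F F₁ p hp hF hd
    refine ⟨fun w => m * p w + w * deriv p w,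
      (analyticAt_const.mul hp).add (analyticAt_id.mul hp.deriv), by simp, ?_⟩
    have hpa : ∀ᶠ w in 𝓝[>] 0, AnalyticAt ℝ p w :=
      nhdsWithin_le_nhds hp.eventually_analyticAt
    filter_upwards [eventually_eventually_nhdsWithin.2 hF, hpa, Ioo_mem_nhdsGT hε]
      with w hw hpw hwε
    have hw0 : (0 : ℝ) < w := hwε.1
    rw [nhdsWithin_eq_nhds.2 (Ioi_mem_nhds hw0)] at hw
    have e1 := (hd w hw0 hwε.2).congr_of_eventuallyEq (hw.mono fun _ h => h.symm)
    have e2 := e1.unique ((hasDerivAt_pow m w).mul hpw.differentiableAt.hasDerivAt)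
    rw [div_eq_iff hw0.ne'] at e2
    rw [e2]
    obtain ⟨k, rfl⟩ := Nat.exists_eq_succ_of_ne_zero hm
    rw [Nat.succ_eq_add_one, Nat.add_sub_cancel]
    ring
  have hDg' : ∀ᶠ w in 𝓝[>] 0, D w = w ^ m * g w := by
    filter_upwards [nhdsWithin_le_nhds hDg] with w hw
    simpa using hw
  obtain ⟨g₁, hg₁, hg₁0, e₁⟩ := step hg hDg' h₁
  obtain ⟨g₂, hg₂, hg₂0, e₂⟩ := step hg₁ e₁ h₂
  obtain ⟨g₃, hg₃, hg₃0, e₃⟩ := step hg₂ e₂ h₃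
  have hlim : ContinuousAt (fun w => g₃ w + A₂ w * g₂ w + A₁ w * g₁ w + A₀ w * g w) 0 :=
    ((hg₃.continuousAt.add (hA₂.mul hg₂.continuousAt)).add (hA₁.mul hg₁.continuousAt)).add
      (hA₀.mul hg.continuousAt)
  have hev : ∀ᶠ w in 𝓝[>] (0 : ℝ), g₃ w + A₂ w * g₂ w + A₁ w * g₁ w + A₀ w * g w = 0 := by
    filter_upwards [hDg', e₁, e₂, e₃, Ioo_mem_nhdsGT hε] with w a b c d hw
    have h := hode w hw.1 hw.2
    rw [a, b, c, d] at h
    have hw0 : w ^ m ≠ 0 := pow_ne_zero _ hw.1.ne'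
    refine (mul_eq_zero.1 ?_).resolve_left hw0
    rw [← h]; ring
  have h0 := tendsto_nhds_unique
    ((hlim.tendsto.mono_left nhdsWithin_le_nhds).congr' hev) (tendsto_const_nhds (x := (0 : ℝ)))
  rw [hA₀0, hA₁0, hA₂0, hg₃0, hg₂0, hg₁0] at h0
  have : (m : ℝ) ≠ 0 := Nat.cast_ne_zero.2 hm
  have : (m : ℝ) * (m * (m * g 0)) = 0 := by linarith
  simp_all

/-- A coefficient of the third order equation satisfied by `(1 - 9w²) f(w)²`, where `f` is the
honeycomb generating function. -/
noncomputable def clausenA₂ (w : ℝ) : ℝ :=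
  (-30 * w + 108 * w ^ 2 - 270 * w ^ 3) /
    ((1 - 9 * w ^ 2) ^ 1 * (1 - 10 * w + 9 * w ^ 2) ^ 1)

/-- A coefficient of the third order equation satisfied by `(1 - 9w²) f(w)²`, where `f` is the
honeycomb generating function. -/
noncomputable def clausenA₁ (w : ℝ) : ℝ :=
  (-22 * w + 500 * w ^ 2 - 4122 * w ^ 3 + 20376 * w ^ 4 - 37098 * w ^ 5 + 40500 * w ^ 6 -
    16038 * w ^ 7) /
    ((1 - 9 * w ^ 2) ^ 2 * (1 - 10 * w + 9 * w ^ 2) ^ 2)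

/-- A coefficient of the third order equation satisfied by `(1 - 9w²) f(w)²`, where `f` is the
honeycomb generating function. -/
noncomputable def clausenA₀ (w : ℝ) : ℝ :=
  (-6 * w + 228 * w ^ 2 - 3456 * w ^ 3 + 27324 * w ^ 4 - 92340 * w ^ 5 + 245916 * w ^ 6 -
    279936 * w ^ 7 + 166212 * w ^ 8 - 39366 * w ^ 9) /
    ((1 - 9 * w ^ 2) ^ 3 * (1 - 10 * w + 9 * w ^ 2) ^ 2)

/-- The change of variable relating the sunrise and honeycomb generating functions. -/
noncomputable def sunriseArg (w : ℝ) : ℝ :=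
  w * (1 - 10 * w + 9 * w ^ 2) / (1 - 9 * w ^ 2) ^ 2

/-- The logarithmic derivative `w x'(w) / x(w)` of `x = sunriseArg`. -/
noncomputable def argLog (w : ℝ) : ℝ :=
  (1 - 2 * w + 9 * w ^ 2) * (1 - 18 * w + 9 * w ^ 2) /
    ((1 - 9 * w ^ 2) * (1 - 10 * w + 9 * w ^ 2))

/-- An iterate of `w d/dw` on `argLog`. -/
noncomputable def argLog₁ (w : ℝ) : ℝ :=
  (-10 * w + 108 * w ^ 2 - 1350 * w ^ 3 + 7848 * w ^ 4 - 12150 * w ^ 5 + 8748 * w ^ 6 -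
    7290 * w ^ 7) /
    ((1 - 9 * w ^ 2) ^ 2 * (1 - 10 * w + 9 * w ^ 2) ^ 2)

/-- An iterate of `w d/dw` on `argLog`. -/
noncomputable def argLog₂ (w : ℝ) : ℝ :=
  (-10 * w + 116 * w ^ 2 - 4050 * w ^ 3 + 49392 * w ^ 4 - 262260 * w ^ 5 + 833976 * w ^ 6 -
    2360340 * w ^ 7 + 4000752 * w ^ 8 - 2952450 * w ^ 9 + 761076 * w ^ 10 - 590490 * w ^ 11) /
    ((1 - 9 * w ^ 2) ^ 3 * (1 - 10 * w + 9 * w ^ 2) ^ 3)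

theorem clausen_factors_pos {w : ℝ} (h0 : 0 ≤ w) (h9 : w < 1 / 9) :
    0 < 1 - 9 * w ^ 2 ∧ 0 < 1 - 10 * w + 9 * w ^ 2 ∧ 0 < 1 - 2 * w + 9 * w ^ 2 :=
  ⟨by nlinarith, by nlinarith, by nlinarith⟩

theorem one_sub_sunriseArg {w : ℝ} (h : 1 - 9 * w ^ 2 ≠ 0) :
    1 - 36 * sunriseArg w = ((1 - 18 * w + 9 * w ^ 2) / (1 - 9 * w ^ 2)) ^ 2 := by
  rw [sunriseArg]
  generalize hU : 1 - 9 * w ^ 2 = u at *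
  field_simp
  subst hU
  ring

theorem sunriseArg_mem {w : ℝ} (h0 : 0 ≤ w) (h9 : w < 1 / 9) (h : 0 < 1 - 18 * w + 9 * w ^ 2) :
    0 ≤ sunriseArg w ∧ |sunriseArg w| < 1 / 36 := by
  obtain ⟨hu, hP, -⟩ := clausen_factors_pos h0 h9
  have hx : 0 ≤ sunriseArg w := by rw [sunriseArg]; positivity
  have h1 := one_sub_sunriseArg hu.ne'
  have h2 : 0 < ((1 - 18 * w + 9 * w ^ 2) / (1 - 9 * w ^ 2)) ^ 2 := by positivity
  exact ⟨hx, by rw [abs_of_nonneg hx]; linarith⟩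

theorem hasDerivAt_sunriseArg {w : ℝ} (h0 : 0 < w) (h9 : w < 1 / 9) :
    HasDerivAt sunriseArg (sunriseArg w * argLog w / w) w := by
  obtain ⟨hu, hP, -⟩ := clausen_factors_pos h0.le h9
  have hn : HasDerivAt (fun w : ℝ => w * (1 - 10 * w + 9 * w ^ 2))
      (1 - 20 * w + 27 * w ^ 2) w := by
    have := (hasDerivAt_id w).mul
      (((hasDerivAt_const w (1 : ℝ)).sub ((hasDerivAt_id w).const_mul 10)).add
        ((hasDerivAt_pow 2 w).const_mul 9))
    refine this.congr_deriv ?_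
    simp; ring
  have hd : HasDerivAt (fun w : ℝ => (1 - 9 * w ^ 2) ^ 2) (2 * (1 - 9 * w ^ 2) * (-18 * w)) w := by
    have := ((hasDerivAt_const w (1 : ℝ)).sub ((hasDerivAt_pow 2 w).const_mul 9)).pow 2
    refine this.congr_deriv ?_
    simp only [Pi.sub_apply, Nat.cast_ofNat, Nat.add_one_sub_one, pow_one]
    ring
  refine (hn.div hd (by positivity)).congr_deriv ?_
  rw [sunriseArg, argLog]
  generalize hU : 1 - 9 * w ^ 2 = u at *
  generalize hV : 1 - 10 * w + 9 * w ^ 2 = p at *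
  field_simp
  subst hU hV
  ring

theorem hasDerivAt_argLog {w : ℝ} (h0 : 0 < w) (h9 : w < 1 / 9) :
    HasDerivAt argLog (argLog₁ w / w) w := by
  obtain ⟨hu, hP, -⟩ := clausen_factors_pos h0.le h9
  have hq : ∀ a : ℝ, HasDerivAt (fun w : ℝ => 1 - a * w + 9 * w ^ 2) (-a + 18 * w) w := fun a => by
    refine (((hasDerivAt_const w (1 : ℝ)).sub ((hasDerivAt_id w).const_mul a)).add
      ((hasDerivAt_pow 2 w).const_mul 9)).congr_deriv ?_
    simp; ring
  have hv : HasDerivAt (fun w : ℝ => 1 - 9 * w ^ 2) (-18 * w) w := by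
    refine ((hasDerivAt_const w (1 : ℝ)).sub ((hasDerivAt_pow 2 w).const_mul 9)).congr_deriv ?_
    simp; ring
  refine (((hq 2).mul (hq 18)).div (hv.mul (hq 10)) (mul_ne_zero hu.ne' hP.ne')).congr_deriv ?_
  rw [argLog₁]
  simp only [Pi.mul_apply]
  generalize hU : 1 - 9 * w ^ 2 = u at *
  generalize hV : 1 - 10 * w + 9 * w ^ 2 = p at *
  field_simp
  subst hU hV
  ring

theorem hasDerivAt_argLog₁ {w : ℝ} (h0 : 0 < w) (h9 : w < 1 / 9) :
    HasDerivAt argLog₁ (argLog₂ w / w) w := by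
  obtain ⟨hu, hP, -⟩ := clausen_factors_pos h0.le h9
  have hq : HasDerivAt (fun w : ℝ => 1 - 10 * w + 9 * w ^ 2) (-10 + 18 * w) w := by
    refine (((hasDerivAt_const w (1 : ℝ)).sub ((hasDerivAt_id w).const_mul 10)).add
      ((hasDerivAt_pow 2 w).const_mul 9)).congr_deriv ?_
    simp; ring
  have hv : HasDerivAt (fun w : ℝ => 1 - 9 * w ^ 2) (-18 * w) w := by
    refine ((hasDerivAt_const w (1 : ℝ)).sub ((hasDerivAt_pow 2 w).const_mul 9)).congr_deriv ?_
    simp; ring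
  have hn : HasDerivAt (fun w : ℝ => -10 * w + 108 * w ^ 2 - 1350 * w ^ 3 + 7848 * w ^ 4
      - 12150 * w ^ 5 + 8748 * w ^ 6 - 7290 * w ^ 7)
      (-10 + 216 * w - 4050 * w ^ 2 + 31392 * w ^ 3 - 60750 * w ^ 4 + 52488 * w ^ 5
        - 51030 * w ^ 6) w := by
    have hp : ∀ (c : ℝ) (n : ℕ), HasDerivAt (fun w : ℝ => c * w ^ n) (c * (n * w ^ (n - 1))) w :=
      fun c n => (hasDerivAt_pow n w).const_mul c
    refine ((((((((hasDerivAt_id w).const_mul (-10)).add (hp 108 2)).sub (hp 1350 3)).add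
      (hp 7848 4)).sub (hp 12150 5)).add (hp 8748 6)).sub (hp 7290 7)).congr_deriv ?_
    norm_num; ring
  refine (hn.div ((hv.pow 2).mul (hq.pow 2))
    (mul_ne_zero (pow_ne_zero 2 hu.ne') (pow_ne_zero 2 hP.ne'))).congr_deriv ?_
  rw [argLog₂]
  simp only [Pi.mul_apply, Pi.pow_apply]
  generalize hU : 1 - 9 * w ^ 2 = u at *
  generalize hV : 1 - 10 * w + 9 * w ^ 2 = p at *
  field_simp
  subst hU hV
  ring

theorem clausen_coefficient_two {w : ℝ} (h0 : 0 < w) (h9 : w < 1 / 9) :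
    (3 * argLog₁ w + clausenA₂ w * argLog w) * (1 - 10 * w + 9 * w ^ 2) ^ 2 =
      -(1 - 9 * w ^ 2) ^ 2 * (60 * sunriseArg w - 432 * sunriseArg w ^ 2) := by
  obtain ⟨hu, hP, -⟩ := clausen_factors_pos h0.le h9
  rw [argLog₁, clausenA₂, argLog, sunriseArg]
  generalize hU : 1 - 9 * w ^ 2 = u at *
  generalize hV : 1 - 10 * w + 9 * w ^ 2 = p at *
  field_simp
  subst hU hV
  ring

theorem clausen_coefficient_one {w : ℝ} (h0 : 0 < w) (h9 : w < 1 / 9) :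
    (argLog₂ w + clausenA₂ w * argLog₁ w + clausenA₁ w * argLog w) *
        (1 - 10 * w + 9 * w ^ 2) ^ 2 =
      -(1 - 9 * w ^ 2) ^ 2 * argLog w * (32 * sunriseArg w - 396 * sunriseArg w ^ 2) := by
  obtain ⟨hu, hP, -⟩ := clausen_factors_pos h0.le h9
  rw [argLog₁, argLog₂, clausenA₂, clausenA₁, argLog, sunriseArg]
  generalize hU : 1 - 9 * w ^ 2 = u at *
  generalize hV : 1 - 10 * w + 9 * w ^ 2 = p at *
  field_simp
  subst hU hV
  ring

theorem clausen_coefficient_zero {w : ℝ} (h0 : 0 < w) (h9 : w < 1 / 9) :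
    clausenA₀ w * (1 - 10 * w + 9 * w ^ 2) ^ 2 =
      -(1 - 9 * w ^ 2) ^ 2 * argLog w * (6 * sunriseArg w - 108 * sunriseArg w ^ 2) := by
  obtain ⟨hu, hP, -⟩ := clausen_factors_pos h0.le h9
  rw [clausenA₀, argLog, sunriseArg]
  generalize hU : 1 - 9 * w ^ 2 = u at *
  generalize hV : 1 - 10 * w + 9 * w ^ 2 = p at *
  field_simp
  subst hU hV
  ring

theorem argLog_sq_mul {w : ℝ} (h0 : 0 < w) (h9 : w < 1 / 9) :
    argLog w ^ 2 * (1 - 10 * w + 9 * w ^ 2) ^ 2 =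
      (1 - 9 * w ^ 2) ^ 2 * (1 - 40 * sunriseArg w + 144 * sunriseArg w ^ 2) := by
  obtain ⟨hu, hP, -⟩ := clausen_factors_pos h0.le h9
  rw [argLog, sunriseArg]
  generalize hU : 1 - 9 * w ^ 2 = u at *
  generalize hV : 1 - 10 * w + 9 * w ^ 2 = p at *
  field_simp
  subst hU hV
  ring

theorem analyticAt_sunriseArg {w : ℝ} (h : 1 - 9 * w ^ 2 ≠ 0) : AnalyticAt ℝ sunriseArg w := by
  unfold sunriseArg
  fun_prop (disch := exact pow_ne_zero 2 h)

theorem one_sub_eighteen_pos {w : ℝ} (h : w < 1 - 2 * √2 / 3) :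
    0 < 1 - 18 * w + 9 * w ^ 2 ∧ w < 1 / 9 := by
  have h2 : √2 ^ 2 = 2 := Real.sq_sqrt (by norm_num)
  have h3 : (1.4 : ℝ) < √2 := Real.lt_sqrt_of_sq_lt (by norm_num)
  exact ⟨by nlinarith, by linarith⟩

open Filter Topology in
/-- A Clausen-type identity: the generating function of `C(2n,n) aₙ` is, after a rational change
of variable, an algebraic multiple of the square of the generating function of `aₙ`. -/
theorem sunrise_eq_honeycomb_sq {w : ℝ} (h0 : 0 ≤ w) (hw : w < 1 - 2 * √2 / 3) :
    powSum sunrise (sunriseArg w) = (1 - 9 * w ^ 2) * powSum honeycomb w ^ 2 := by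
  set K : ℕ → ℝ → ℝ := fun j w => powSum (eulerCoeff^[j] sunrise) (sunriseArg w) with hK
  set F : ℕ → ℝ → ℝ := fun j => powSum (eulerCoeff^[j] honeycomb) with hF
  have cK : ∀ j, CauchyBounded (1 / 36) (eulerCoeff^[j] sunrise) := fun j => by
    induction j with
    | zero => exact sunrise_cauchyBounded
    | succ j ih => rw [Function.iterate_succ_apply']; exact ih.euler
  have cF : ∀ j, CauchyBounded (1 / 9) (eulerCoeff^[j] honeycomb) := fun j => by
    induction j with
    | zero => exact honeycomb_cauchyBounded
    | succ j ih => rw [Function.iterate_succ_apply']; exact ih.euler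
  have an : ∀ v, 0 ≤ v → v < 1 - 2 * √2 / 3 →
      AnalyticAt ℝ (fun w => (1 - 9 * w ^ 2) * F 0 w ^ 2 - K 0 w) v := fun v hv0 hv => by
    obtain ⟨hq, h9⟩ := one_sub_eighteen_pos hv
    obtain ⟨hu, -, -⟩ := clausen_factors_pos hv0 h9
    have a1 := (cF 0).analyticAt (w := v) (by rwa [abs_of_nonneg hv0])
    have a2 := ((cK 0).analyticAt (sunriseArg_mem hv0 h9 hq).2).comp
      (analyticAt_sunriseArg hu.ne')
    exact (AnalyticAt.mul (by fun_prop) (a1.pow 2)).sub a2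
  have dF : ∀ j v, 0 < v → v < 1 / 36 → HasDerivAt (F j) (F (j + 1) v / v) v :=
    fun j v hv0 hv => by
      simp only [hF, Function.iterate_succ_apply']
      exact (cF j).hasDerivAt hv0.ne' (by rw [abs_of_pos hv0]; linarith)
  have dK : ∀ j v, 0 < v → v < 1 / 36 → HasDerivAt (K j) (K (j + 1) v * argLog v / v) v :=
    fun j v hv0 hv => by
      have h9 : v < 1 / 9 := by linarith
      obtain ⟨hu, hP, -⟩ := clausen_factors_pos hv0.le h9
      have hx : 0 < sunriseArg v := by rw [sunriseArg]; positivity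
      have hd := ((cK j).hasDerivAt hx.ne'
        (sunriseArg_mem hv0.le h9 (by nlinarith)).2).comp v (hasDerivAt_sunriseArg hv0 h9)
      simp only [hK, Function.iterate_succ_apply']
      refine hd.congr_deriv ?_
      field_simp
  have key : ∀ᶠ v in 𝓝 0, (1 - 9 * v ^ 2) * F 0 v ^ 2 - K 0 v = 0 := by
    refine eventually_eq_zero_of_euler_ode (ε := 1 / 36)
      (D₁ := fun v => (-18 * v ^ 2 * F 0 v ^ 2 + 2 * (1 - 9 * v ^ 2) * (F 0 v * F 1 v))
        - K 1 v * argLog v)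
      (D₂ := fun v => (-36 * v ^ 2 * F 0 v ^ 2 - 72 * v ^ 2 * (F 0 v * F 1 v)
        + 2 * (1 - 9 * v ^ 2) * (F 1 v ^ 2 + F 0 v * F 2 v))
        - (K 2 v * argLog v ^ 2 + K 1 v * argLog₁ v))
      (D₃ := fun v => (-72 * v ^ 2 * F 0 v ^ 2 - 216 * v ^ 2 * (F 0 v * F 1 v)
        - 108 * v ^ 2 * (F 1 v ^ 2 + F 0 v * F 2 v)
        + 2 * (1 - 9 * v ^ 2) * (3 * (F 1 v * F 2 v) + F 0 v * F 3 v))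
        - (K 3 v * argLog v ^ 3 + 3 * (K 2 v * argLog v * argLog₁ v) + K 1 v * argLog₂ v))
      (A₀ := clausenA₀) (A₁ := clausenA₁) (A₂ := clausenA₂) (by norm_num)
      (an 0 le_rfl ?_) ?_ ?_ ?_ ?_ ?_ ?_ ?_ ?_ ?_ ?_ ?_
    · exact h0.trans_lt hw
    · simp [hK, hF, sunriseArg, powSum_zero, sunrise, honeycomb_zero]
    · unfold clausenA₀; fun_prop (disch := norm_num)
    · unfold clausenA₁; fun_prop (disch := norm_num)
    · unfold clausenA₂; fun_prop (disch := norm_num)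
    · simp [clausenA₀]
    · simp [clausenA₁]
    · simp [clausenA₂]
    · intro v hv0 hv
      have hv' : HasDerivAt (fun w : ℝ => 1 - 9 * w ^ 2) (-18 * v) v := by
        refine ((hasDerivAt_const v (1 : ℝ)).sub ((hasDerivAt_pow 2 v).const_mul 9)).congr_deriv ?_
        simp; ring
      refine ((hv'.mul ((dF 0 v hv0 hv).pow 2)).sub (dK 0 v hv0 hv)).congr_deriv ?_
      simp only [Pi.pow_apply]
      field_simp
      push_cast
      ring
    · intro v hv0 hv
      have hv' : HasDerivAt (fun w : ℝ => 1 - 9 * w ^ 2) (-18 * v) v := by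
        refine ((hasDerivAt_const v (1 : ℝ)).sub ((hasDerivAt_pow 2 v).const_mul 9)).congr_deriv ?_
        simp; ring
      have d0 := dF 0 v hv0 hv
      have d1 := dF 1 v hv0 hv
      have e2 := (hasDerivAt_pow 2 v)
      refine ((((e2.const_mul (-18)).mul (d0.pow 2)).add ((hv'.const_mul 2).mul (d0.mul d1))).sub
        ((dK 1 v hv0 hv).mul (hasDerivAt_argLog hv0 (by linarith)))).congr_deriv ?_
      simp only [Pi.pow_apply, Pi.mul_apply]
      field_simp
      push_cast
      ring
    · intro v hv0 hv
      have hv' : HasDerivAt (fun w : ℝ => 1 - 9 * w ^ 2) (-18 * v) v := by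
        refine ((hasDerivAt_const v (1 : ℝ)).sub ((hasDerivAt_pow 2 v).const_mul 9)).congr_deriv ?_
        simp; ring
      have d0 := dF 0 v hv0 hv
      have d1 := dF 1 v hv0 hv
      have d2 := dF 2 v hv0 hv
      have e2 := (hasDerivAt_pow 2 v)
      have l0 := hasDerivAt_argLog hv0 (by linarith : v < 1 / 9)
      have l1 := hasDerivAt_argLog₁ hv0 (by linarith : v < 1 / 9)
      refine (((((e2.const_mul (-36)).mul (d0.pow 2)).sub ((e2.const_mul 72).mul (d0.mul d1))).add
        ((hv'.const_mul 2).mul ((d1.pow 2).add (d0.mul d2)))).sub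
        (((dK 2 v hv0 hv).mul (l0.pow 2)).add ((dK 1 v hv0 hv).mul l1))).congr_deriv ?_
      simp only [Pi.pow_apply, Pi.mul_apply, Pi.add_apply]
      field_simp
      push_cast
      ring
    · intro v hv0 hv
      have h9 : v < 1 / 9 := by linarith
      obtain ⟨hu, hP, hR⟩ := clausen_factors_pos hv0.le h9
      have hq : 0 < 1 - 18 * v + 9 * v ^ 2 := by nlinarith
      have o1 : (1 - 10 * v + 9 * v ^ 2) * F 2 v = _ :=
        honeycomb_ode (w := v) (by rwa [abs_of_pos hv0])
      have o2 : (1 - 10 * v + 9 * v ^ 2) * F 3 v = _ :=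
        honeycomb_ode_deriv (w := v) (by rwa [abs_of_pos hv0])
      have o3 : (1 - 40 * sunriseArg v + 144 * sunriseArg v ^ 2) * K 3 v = _ :=
        sunrise_ode (sunriseArg_mem hv0.le h9 hq).2
      change _ = (10 * v - 18 * v ^ 2) * F 1 v + (3 * v - 9 * v ^ 2) * F 0 v at o1
      change _ = (20 * v - 36 * v ^ 2) * F 2 v + (13 * v - 45 * v ^ 2) * F 1 v
        + (3 * v - 18 * v ^ 2) * F 0 v at o2
      change _ = (60 * sunriseArg v - 432 * sunriseArg v ^ 2) * K 2 v
        + (32 * sunriseArg v - 396 * sunriseArg v ^ 2) * K 1 v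
        + (6 * sunriseArg v - 108 * sunriseArg v ^ 2) * K 0 v at o3
      have c2 := clausen_coefficient_two hv0 h9
      have c1 := clausen_coefficient_one hv0 h9
      have c0 := clausen_coefficient_zero hv0 h9
      have cl := argLog_sq_mul hv0 h9
      have hk : (1 - 10 * v + 9 * v ^ 2) ^ 2 *
          ((K 3 v * argLog v ^ 3 + 3 * (K 2 v * argLog v * argLog₁ v) + K 1 v * argLog₂ v)
          + clausenA₂ v * (K 2 v * argLog v ^ 2 + K 1 v * argLog₁ v)
          + clausenA₁ v * (K 1 v * argLog v) + clausenA₀ v * K 0 v) = 0 := by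
        linear_combination K 3 v * argLog v * cl + (1 - 9 * v ^ 2) ^ 2 * argLog v * o3
          + K 2 v * argLog v * c2 + K 1 v * c1 + K 0 v * c0
      have hk' := (mul_eq_zero.1 hk).resolve_left (by positivity)
      have hh : (-72 * v ^ 2 * F 0 v ^ 2 - 216 * v ^ 2 * (F 0 v * F 1 v)
        - 108 * v ^ 2 * (F 1 v ^ 2 + F 0 v * F 2 v)
        + 2 * (1 - 9 * v ^ 2) * (3 * (F 1 v * F 2 v) + F 0 v * F 3 v))
        + clausenA₂ v * (-36 * v ^ 2 * F 0 v ^ 2 - 72 * v ^ 2 * (F 0 v * F 1 v)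
        + 2 * (1 - 9 * v ^ 2) * (F 1 v ^ 2 + F 0 v * F 2 v))
        + clausenA₁ v * (-18 * v ^ 2 * F 0 v ^ 2 + 2 * (1 - 9 * v ^ 2) * (F 0 v * F 1 v))
        + clausenA₀ v * ((1 - 9 * v ^ 2) * F 0 v ^ 2) = 0 := by
        have o1' : F 2 v = ((10 * v - 18 * v ^ 2) * F 1 v + (3 * v - 9 * v ^ 2) * F 0 v) /
            (1 - 10 * v + 9 * v ^ 2) := by rw [eq_div_iff hP.ne', ← o1, mul_comm]
        have o2' : F 3 v = ((20 * v - 36 * v ^ 2) * F 2 v + (13 * v - 45 * v ^ 2) * F 1 v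
            + (3 * v - 18 * v ^ 2) * F 0 v) /
            (1 - 10 * v + 9 * v ^ 2) := by rw [eq_div_iff hP.ne', ← o2, mul_comm]
        rw [o2', o1', clausenA₀, clausenA₁, clausenA₂]
        generalize F 0 v = f₀
        generalize F 1 v = f₁
        generalize hU : 1 - 9 * v ^ 2 = u at *
        generalize hV : 1 - 10 * v + 9 * v ^ 2 = p at *
        field_simp
        subst hU hV
        ring
      linear_combination hh - hk'
  have hz := AnalyticOnNhd.eqOn_zero_of_preconnected_of_eventuallyEq_zero
    (U := Set.Ico 0 (1 - 2 * √2 / 3)) (fun v hv => an v hv.1 hv.2) isPreconnected_Ico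
    (Set.left_mem_Ico.2 (h0.trans_lt hw)) key ⟨h0, hw⟩
  change (1 - 9 * w ^ 2) * powSum honeycomb w ^ 2 - powSum sunrise (sunriseArg w) = 0 at hz
  linear_combination -hz

open Filter Topology in
/-- The critical value of the honeycomb argument, mapped to `1 / 36` by `sunriseArg`. -/
theorem hasSum_sunrise_critical :
    HasSum (fun n => sunrise n * (1 / 36) ^ n)
      ((1 - 9 * (1 - 2 * √2 / 3) ^ 2) * powSum honeycomb (1 - 2 * √2 / 3) ^ 2) := by
  set c : ℝ := 1 - 2 * √2 / 3 with hc
  have h2 : √2 ^ 2 = 2 := Real.sq_sqrt (by norm_num)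
  have hlow : (1.4 : ℝ) < √2 := Real.lt_sqrt_of_sq_lt (by norm_num)
  have hupp : √2 < (1.5 : ℝ) := by rw [Real.sqrt_lt' (by norm_num)]; norm_num
  have hc0 : 0 < c := by rw [hc]; linarith
  have hc9 : c < 1 / 9 := by rw [hc]; linarith
  have hroot : 1 - 18 * c + 9 * c ^ 2 = 0 := by rw [hc]; linear_combination 4 * h2
  obtain ⟨hu, hP, -⟩ := clausen_factors_pos hc0.le hc9
  have hxc : sunriseArg c = 1 / 36 := by
    have := one_sub_sunriseArg hu.ne'
    rw [hroot, zero_div] at this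
    linarith
  have hcont : Tendsto (fun w => (1 - 9 * w ^ 2) * powSum honeycomb w ^ 2) (𝓝[<] c)
      (𝓝 ((1 - 9 * c ^ 2) * powSum honeycomb c ^ 2)) := by
    have := (honeycomb_cauchyBounded.analyticAt (w := c) (by rwa [abs_of_pos hc0])).continuousAt
    exact ContinuousAt.tendsto (f := fun w => (1 - 9 * w ^ 2) * powSum honeycomb w ^ 2)
      (by fun_prop) |>.mono_left nhdsWithin_le_nhds
  have hxt : Tendsto sunriseArg (𝓝[<] c) (𝓝 (1 / 36)) := by
    rw [← hxc]
    exact (analyticAt_sunriseArg hu.ne').continuousAt.tendsto.mono_left nhdsWithin_le_nhds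
  have hnn : ∀ n, 0 ≤ sunrise n * (1 / 36 : ℝ) ^ n := fun n =>
    mul_nonneg (sunrise_nonneg n) (by positivity)
  have hev : ∀ᶠ w in 𝓝[<] c, 0 ≤ w ∧ w < c := by
    filter_upwards [Ioo_mem_nhdsLT hc0] with w hw using ⟨hw.1.le, hw.2⟩
  have hle : ∀ s : Finset ℕ, ∑ n ∈ s, sunrise n * (1 / 36) ^ n ≤
      (1 - 9 * c ^ 2) * powSum honeycomb c ^ 2 := fun s => by
    refine le_of_tendsto_of_tendsto
      (tendsto_finsetSum s fun n _ => (hxt.pow n).const_mul (sunrise n)) hcont ?_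
    filter_upwards [hev] with w hw
    obtain ⟨hq, h9⟩ := one_sub_eighteen_pos hw.2
    obtain ⟨hx0, hx⟩ := sunriseArg_mem hw.1 h9 hq
    rw [← sunrise_eq_honeycomb_sq hw.1 hw.2]
    exact sum_le_hasSum s (fun n _ => mul_nonneg (sunrise_nonneg n) (by positivity))
      (sunrise_cauchyBounded.hasSum hx)
  have hsum := summable_of_sum_le hnn hle
  convert hsum.hasSum using 1
  refine le_antisymm (le_of_tendsto hcont ?_) (hsum.tsum_le_of_sum_le hle)
  filter_upwards [hev] with w hw
  obtain ⟨hq, h9⟩ := one_sub_eighteen_pos hw.2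
  obtain ⟨hx0, hx⟩ := sunriseArg_mem hw.1 h9 hq
  rw [← sunrise_eq_honeycomb_sq hw.1 hw.2]
  refine (sunrise_cauchyBounded.hasSum hx).summable.tsum_le_tsum (fun n => ?_) hsum
  have := (le_abs_self _).trans hx.le
  exact mul_le_mul_of_nonneg_left (pow_le_pow_left₀ hx0 this n) (sunrise_nonneg n)

lemma convexOn_log_Gamma_div_add {m c : ℝ} (hm : 0 < m) (hc : 0 ≤ c) :
    ConvexOn ℝ (Set.Ioi (0 : ℝ)) fun s => log (Gamma (s / m + c)) := by
  have hmem : ∀ x ∈ Set.Ioi (0 : ℝ), x / m + c ∈ Set.Ioi (0 : ℝ) := fun x hx => by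
    have : 0 < x / m := div_pos hx hm
    exact Set.mem_Ioi.2 (by linarith)
  refine ⟨convex_Ioi _, fun x hx y hy a b ha hb hab => ?_⟩
  have h := convexOn_log_Gamma.2 (hmem x hx) (hmem y hy) ha hb hab
  have e : (a • x + b • y) / m + c = a • (x / m + c) + b • (y / m + c) := by
    simp only [smul_eq_mul]
    linear_combination (-c) * hab
  simp only [smul_eq_mul, Function.comp_apply] at e h ⊢
  rwa [e]

lemma Gamma_one_third_mul_two_thirds : Gamma (1 / 3) * Gamma (2 / 3) = 2 * π / √3 := by
  have h := Real.Gamma_mul_Gamma_one_sub (1 / 3)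
  rw [show (1 : ℝ) - 1 / 3 = 2 / 3 by norm_num, show π * (1 / 3) = π / 3 by ring, sin_pi_div_three]
    at h
  rw [h]
  field_simp

/-- Gauss's triplication formula for positive real arguments. -/
theorem Gamma_triplication {s : ℝ} (hs : 0 < s) :
    Gamma (s / 3) * Gamma (s / 3 + 1 / 3) * Gamma (s / 3 + 2 / 3) =
      Gamma s * 3 ^ (1 - s) * (2 * π / √3) := by
  set C : ℝ := Gamma (1 / 3) * Gamma (2 / 3) with hC
  have hC0 : 0 < C := mul_pos (Gamma_pos_of_pos (by norm_num)) (Gamma_pos_of_pos (by norm_num))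
  let g : ℝ → ℝ := fun s =>
    Gamma (s / 3) * Gamma (s / 3 + 1 / 3) * Gamma (s / 3 + 2 / 3) * 3 ^ (s - 1) / C
  have hpos : ∀ {c x : ℝ}, 0 ≤ c → 0 < x → 0 < Gamma (x / 3 + c) := fun {c x} hc hx =>
    Gamma_pos_of_pos (by positivity)
  have hpos' : ∀ {x : ℝ}, 0 < x → 0 < Gamma (x / 3) := fun {x} hx =>
    Gamma_pos_of_pos (by positivity)
  have hconv : ConvexOn ℝ (Set.Ioi (0 : ℝ)) (log ∘ g) := by
    have h0 := convexOn_log_Gamma_div_add (m := 3) (c := 0) (by norm_num) le_rfl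
    have h1 := convexOn_log_Gamma_div_add (m := 3) (c := 1 / 3) (by norm_num) (by norm_num)
    have h2 := convexOn_log_Gamma_div_add (m := 3) (c := 2 / 3) (by norm_num) (by norm_num)
    have h3 := (convexOn_id (𝕜 := ℝ) (convex_Ioi (0 : ℝ))).smul
      (log_pos (by norm_num : (1:ℝ) < 3)).le
    refine ((((h0.add h1).add h2).add h3).add_const (-log 3 - log C)).congr fun x hx => ?_
    have hx : 0 < x := hx
    have p0 := (hpos' hx).ne'
    have p1 := (hpos (c := 1 / 3) (by norm_num) hx).ne'
    have p2 := (hpos (c := 2 / 3) (by norm_num) hx).ne'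
    have p3 : (3 : ℝ) ^ (x - 1) ≠ 0 := by positivity
    simp only [Function.comp_apply, g, Pi.add_apply, add_zero, id, smul_eq_mul]
    rw [log_div (by positivity) hC0.ne', log_mul (by positivity) p3, log_mul (by positivity) p2,
      log_mul p0 p1, log_rpow (by norm_num)]
    ring
  have hg := eq_Gamma_of_log_convex hconv (fun {y} hy => ?_) (fun {y} hy => ?_) ?_ hs
  · rw [← hg, ← Gamma_one_third_mul_two_thirds, ← hC]
    simp only [g]
    rw [show (1 : ℝ) - s = -(s - 1) by ring, rpow_neg (by norm_num)]
    field_simp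
  · simp only [g]
    rw [show (y + 1) / 3 = y / 3 + 1 / 3 by ring,
      show y / 3 + 1 / 3 + 1 / 3 = y / 3 + 2 / 3 by ring,
      show y / 3 + 1 / 3 + 2 / 3 = y / 3 + 1 by ring, Gamma_add_one (by positivity),
      show y + 1 - 1 = y - 1 + 1 by ring, rpow_add_one (by norm_num)]
    field_simp
  · have := hpos' hy
    have := hpos (c := 1 / 3) (by norm_num) hy
    have := hpos (c := 2 / 3) (by norm_num) hy
    simp only [g]
    positivity
  · simp only [g]
    rw [show (1 : ℝ) / 3 + 1 / 3 = 2 / 3 by norm_num, show (1 : ℝ) / 3 + 2 / 3 = 1 by norm_num,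
      Gamma_one, sub_self, rpow_zero, mul_one, mul_one, ← hC, div_self hC0.ne']

lemma sin_mul_sin_eleven_seven :
    sin (π * (11 / 24)) * sin (π * (7 / 24)) = (√3 + √2) / 4 := by
  have h1 := cos_sub (π * (11 / 24)) (π * (7 / 24))
  have h2 := cos_add (π * (11 / 24)) (π * (7 / 24))
  rw [show π * (11 / 24) - π * (7 / 24) = π / 6 by ring, cos_pi_div_six] at h1
  rw [show π * (11 / 24) + π * (7 / 24) = π - π / 4 by ring, cos_pi_sub, cos_pi_div_four] at h2
  linarith

lemma Gamma_quarter_mul : Gamma (1 / 4) * Gamma (3 / 4) = π * √2 := by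
  have h := Real.Gamma_mul_Gamma_one_sub (1 / 4)
  rw [show (1 : ℝ) - 1 / 4 = 3 / 4 by norm_num, show π * (1 / 4) = π / 4 by ring,
    sin_pi_div_four] at h
  rw [h]
  have : √2 ^ 2 = 2 := sq_sqrt (by norm_num)
  field_simp
  linarith

open ProbabilityTheory in
lemma beta_mul_beta :
    beta (1 / 24) (5 / 24) * beta (7 / 24) (11 / 24) =
      Gamma (1 / 24) * Gamma (5 / 24) * Gamma (7 / 24) * Gamma (11 / 24) / (π * √2) := by
  rw [beta, beta, ← Gamma_quarter_mul]
  norm_num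
  field_simp

open ProbabilityTheory in
lemma beta_ratio :
    beta (1 / 24) (5 / 24) =
      √2 * 3 ^ (1 / 4 : ℝ) * (√3 + √2) * beta (7 / 24) (11 / 24) := by
  have d1 := Real.Gamma_mul_Gamma_add_half (1 / 24)
  have d5 := Real.Gamma_mul_Gamma_add_half (5 / 24)
  have r11 := Real.Gamma_mul_Gamma_one_sub (11 / 24)
  have r7 := Real.Gamma_mul_Gamma_one_sub (7 / 24)
  have t := Gamma_triplication (s := 1 / 4) (by norm_num)
  have hs := sin_mul_sin_eleven_seven
  have hp1 : (2 : ℝ) ^ (11 / 12 : ℝ) * 2 ^ (7 / 12 : ℝ) = 2 * √2 := by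
    rw [← rpow_add (by norm_num), sqrt_eq_rpow,
      show (11 / 12 : ℝ) + 7 / 12 = 1 + 1 / 2 by norm_num, rpow_add (by norm_num), rpow_one]
  have hp3 : (3 : ℝ) ^ (3 / 4 : ℝ) = 3 ^ (1 / 4 : ℝ) * √3 := by
    rw [sqrt_eq_rpow, ← rpow_add (by norm_num)]
    norm_num
  norm_num at d1 d5 r11 r7 t
  norm_num [beta]
  have q := Gamma_quarter_mul
  have s1 : 0 < sin (π * (11 / 24)) :=
    sin_pos_of_pos_of_lt_pi (by positivity) (by linarith [pi_pos])
  have s7 : 0 < sin (π * (7 / 24)) :=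
    sin_pos_of_pos_of_lt_pi (by positivity) (by linarith [pi_pos])
  have g : ∀ {x : ℝ}, 0 < x → 0 < Gamma x := fun h => Gamma_pos_of_pos h
  have g1 := g (x := 1 / 24) (by norm_num)
  have g5 := g (x := 5 / 24) (by norm_num)
  have g7 := g (x := 7 / 24) (by norm_num)
  have g11 := g (x := 11 / 24) (by norm_num)
  have g13 := g (x := 13 / 24) (by norm_num)
  have g17 := g (x := 17 / 24) (by norm_num)
  have g14 := g (x := 1 / 4) (by norm_num)
  have g34 := g (x := 3 / 4) (by norm_num)
  have hπ : √π * √π = π := mul_self_sqrt pi_pos.le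
  have t' : Gamma (1 / 12) * Gamma (5 / 12) * Gamma (3 / 4) =
      Gamma (1 / 4) * 3 ^ (1 / 4 : ℝ) * (2 * π) := by
    rw [t, hp3]
    field_simp
  have d : Gamma (1 / 24) * Gamma (5 / 24) * (Gamma (13 / 24) * Gamma (17 / 24)) =
      Gamma (1 / 12) * Gamma (5 / 12) * (2 * √2) * π := by
    rw [← hp1, ← hπ]
    linear_combination Gamma (5 / 24) * Gamma (17 / 24) * d1 +
      Gamma (1 / 12) * 2 ^ (11 / 12 : ℝ) * √π * d5
  rw [eq_div_iff s1.ne'] at r11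
  rw [eq_div_iff s7.ne'] at r7
  have r : Gamma (7 / 24) * Gamma (11 / 24) * (Gamma (13 / 24) * Gamma (17 / 24)) *
      ((√3 + √2) / 4) = π ^ 2 := by
    rw [← hs]
    linear_combination Gamma (7 / 24) * Gamma (17 / 24) * sin (π * (7 / 24)) * r11 + π * r7
  rw [← mul_div_assoc, div_eq_div_iff g14.ne' g34.ne']
  refine mul_right_cancel₀ (mul_pos g13 g17).ne' ?_
  linear_combination Gamma (3 / 4) * d + 2 * √2 * π * t' -
    4 * √2 * 3 ^ (1 / 4 : ℝ) * Gamma (1 / 4) * r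

open MeasureTheory Set ProbabilityTheory in
lemma setIntegral_beta {a b : ℝ} (ha : 0 < a) (hb : 0 < b) :
    ∫ x in Ioo (0 : ℝ) 1, x ^ (a - 1) * (1 - x) ^ (b - 1) = beta a b := by
  rw [beta_eq_betaIntegralReal a b ha hb, Complex.betaIntegral,
    intervalIntegral.integral_of_le zero_le_one, ← integral_Ioc_eq_integral_Ioo]
  have hint : IntegrableOn (fun x : ℝ => (x : ℂ) ^ ((a : ℂ) - 1) * (1 - (x : ℂ)) ^ ((b : ℂ) - 1))
      (Ioc 0 1) := by
    have := Complex.betaIntegral_convergent (u := a) (v := b) (by simpa) (by simpa)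
    rwa [intervalIntegrable_iff_integrableOn_Ioc_of_le zero_le_one] at this
  rw [← RCLike.re_to_complex, ← integral_re hint]
  refine setIntegral_congr_fun measurableSet_Ioc fun x hx => ?_
  have h1 : (0 : ℝ) ≤ 1 - x := by linarith [hx.2]
  simp only [RCLike.re_to_complex]
  rw [show (1 : ℂ) - (x : ℂ) = ((1 - x : ℝ) : ℂ) by push_cast; rfl,
    show (a : ℂ) - 1 = ((a - 1 : ℝ) : ℂ) by push_cast; rfl,
    show (b : ℂ) - 1 = ((b - 1 : ℝ) : ℂ) by push_cast; rfl,
    ← Complex.ofReal_cpow hx.1.le, ← Complex.ofReal_cpow h1, ← Complex.ofReal_mul,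
    Complex.ofReal_re]

open MeasureTheory Set ProbabilityTheory in
lemma setIntegral_beta_fold {a b : ℝ} (ha : 0 < a) (hb : 0 < b) :
    ∫ x in Ioo (0 : ℝ) (1 / 2), (x ^ (a - 1) * (1 - x) ^ (b - 1) +
      x ^ (b - 1) * (1 - x) ^ (a - 1)) = beta a b := by
  have key : ∀ {a b : ℝ}, 0 < a → 0 < b →
      IntegrableOn (fun x : ℝ => x ^ (a - 1) * (1 - x) ^ (b - 1)) (Ioo 0 1) := fun {a b} ha hb =>
    .of_integral_ne_zero (by rw [setIntegral_beta ha hb]; exact (beta_pos ha hb).ne')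
  have hI := key ha hb
  have hsub : Ioo (0 : ℝ) (1 / 2) ⊆ Ioo 0 1 := Ioo_subset_Ioo_right (by norm_num)
  have hsub' : Ioo (1 / 2 : ℝ) 1 ⊆ Ioo 0 1 := Ioo_subset_Ioo_left (by norm_num)
  rw [integral_add (hI.mono_set hsub) ((key hb ha).mono_set hsub), ← setIntegral_beta ha hb,
    ← integral_Ioc_eq_integral_Ioo (x := (0 : ℝ)) (y := 1),
    ← intervalIntegral.integral_of_le zero_le_one,
    ← intervalIntegral.integral_add_adjacent_intervals (b := 1 / 2)]
  · rw [intervalIntegral.integral_of_le (by norm_num), integral_Ioc_eq_integral_Ioo]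
    congr 1
    have := intervalIntegral.integral_comp_sub_left
      (fun x : ℝ => x ^ (a - 1) * (1 - x) ^ (b - 1)) (a := 0) (b := 1 / 2) 1
    norm_num at this
    rw [← integral_Ioc_eq_integral_Ioo, ← intervalIntegral.integral_of_le (by norm_num), ← this]
    exact intervalIntegral.integral_congr fun x _ => mul_comm _ _
  · rw [intervalIntegrable_iff_integrableOn_Ioo_of_le (by norm_num)]
    exact hI.mono_set hsub
  · rw [intervalIntegrable_iff_integrableOn_Ioo_of_le (by norm_num)]
    exact hI.mono_set hsub'

open MeasureTheory Set ProbabilityTheory in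
lemma setIntegral_beta_sextic {a b : ℝ} (ha : 0 < a) (hb : 0 < b) :
    ∫ x in Ioo (0 : ℝ) 1, 6 * (x ^ (6 * a - 1) + x ^ (6 * b - 1)) * (1 + x ^ 6) ^ (-(a + b)) =
      beta a b := by
  have hd : ∀ x ∈ Ioo (0 : ℝ) 1, HasDerivWithinAt (fun x : ℝ => x ^ 6 / (1 + x ^ 6))
      (6 * x ^ 5 / (1 + x ^ 6) ^ 2) (Ioo 0 1) x := fun x hx => by
    have hx0 : 0 < 1 + x ^ 6 := by positivity
    have h := (hasDerivAt_pow 6 x).div ((hasDerivAt_pow 6 x).const_add 1) hx0.ne'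
    refine (h.congr_deriv ?_).hasDerivWithinAt
    congr 1
    norm_num
    ring
  have hmono : ∀ x y : ℝ, 0 < x → 0 < y → x ^ 6 / (1 + x ^ 6) = y ^ 6 / (1 + y ^ 6) → x = y := by
    intro x y hx hy h
    rw [div_eq_div_iff (by positivity) (by positivity)] at h
    have : x ^ 6 = y ^ 6 := by linarith
    exact (pow_left_inj₀ hx.le hy.le (by norm_num)).1 this
  have himg : (fun x : ℝ => x ^ 6 / (1 + x ^ 6)) '' Ioo 0 1 = Set.Ioo 0 (1 / 2) := by
    ext y
    constructor
    · rintro ⟨x, hx, rfl⟩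
      have hx0 : 0 < x ^ 6 := pow_pos hx.1 6
      have hx1 : x ^ 6 < 1 := pow_lt_one₀ hx.1.le hx.2 (by norm_num)
      refine ⟨by positivity, ?_⟩
      rw [div_lt_div_iff₀ (by positivity) (by norm_num)]
      linarith
    · rintro ⟨h0, h1⟩
      have h2 : 0 < 1 - y := by linarith
      have h3 : 0 < y / (1 - y) := by positivity
      have h4 : y / (1 - y) < 1 := by rw [div_lt_one h2]; linarith
      refine ⟨(y / (1 - y)) ^ (1 / 6 : ℝ), ⟨by positivity,
        rpow_lt_one h3.le h4 (by norm_num)⟩, ?_⟩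
      have : ((y / (1 - y)) ^ (1 / 6 : ℝ)) ^ 6 = y / (1 - y) := by
        rw [← rpow_natCast, ← rpow_mul h3.le]
        norm_num
      simp only [this]
      field_simp
      ring
  rw [← setIntegral_beta_fold ha hb, ← himg, integral_image_eq_integral_abs_deriv_smul
    measurableSet_Ioo hd (fun x hx y hy h => hmono x y hx.1 hy.1 h)]
  refine setIntegral_congr_fun measurableSet_Ioo fun x hx => ?_
  have hx0 : 0 < x := hx.1
  set u : ℝ := 1 + x ^ 6 with hu
  have hu0 : 0 < u := by positivity
  have e1 : 1 - x ^ 6 / u = 1 / u := by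
    field_simp
    linarith
  have e2 : ∀ a b : ℝ, (x ^ 6 / u) ^ (a - 1) * (1 / u) ^ (b - 1) =
      x ^ (6 * a - 1) * u ^ (-(a + b)) * (u ^ 2 / x ^ 5) := by
    intro a b
    rw [div_rpow (by positivity) hu0.le, div_rpow zero_le_one hu0.le, one_rpow, ← rpow_natCast x 6,
      ← rpow_mul hx0.le, div_mul_div_comm, mul_one, ← rpow_add hu0, mul_div_assoc',
      div_eq_div_iff (by positivity) (by positivity), ← rpow_natCast x 5, ← rpow_natCast u 2,
      ← rpow_add hx0]
    have : u ^ (-(a + b)) * u ^ ((2 : ℕ) : ℝ) * u ^ (a - 1 + (b - 1)) = 1 := by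
      rw [← rpow_add hu0, ← rpow_add hu0]
      convert rpow_zero u using 2
      push_cast
      ring
    rw [mul_assoc, mul_assoc, ← mul_assoc (u ^ _), this, mul_one]
    congr 1
    push_cast
    ring
  simp only [smul_eq_mul, e1]
  rw [e2, e2, add_comm b a, abs_of_pos (by positivity)]
  field_simp

open MeasureTheory Set ProbabilityTheory in
lemma setIntegral_cubic_eq_beta {a : ℝ} (ha : 0 < a) :
    ∫ v in Ioi (2 / √3), (v - 2 / √3) ^ (-(1 / 2) : ℝ) * (v ^ 3 - v) ^ (-(2 * a + 1 / 6)) =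
      3 ^ (3 * a) / 6 * beta a (a + 1 / 6) := by
  have h3 : 0 < √3 := by positivity
  have hs3 : √3 ^ 2 = 3 := sq_sqrt (by norm_num)
  have hd : ∀ x ∈ Ioo (0 : ℝ) 1, HasDerivWithinAt (fun x : ℝ => (x + x⁻¹) / √3)
      ((1 + -(x ^ 2)⁻¹) / √3) (Ioo 0 1) x := fun x hx =>
    (((hasDerivAt_id x).add (hasDerivAt_inv hx.1.ne')).div_const _).hasDerivWithinAt
  have hinj : InjOn (fun x : ℝ => (x + x⁻¹) / √3) (Ioo 0 1) := by
    intro x hx y hy h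
    have hx0 := hx.1
    have hy0 := hy.1
    have hxy : x * y < 1 := mul_lt_one_of_nonneg_of_lt_one_left hx0.le hx.2 hy.2.le
    field_simp at h
    have : (x - y) * (1 - x * y) = 0 := by linear_combination -h
    rcases mul_eq_zero.1 this with h | h <;> linarith
  have himg : (fun x : ℝ => (x + x⁻¹) / √3) '' Ioo 0 1 = Set.Ioi (2 / √3) := by
    ext y
    constructor
    · rintro ⟨x, ⟨hx0, hx1⟩, rfl⟩
      have : 2 < x + x⁻¹ := by
        rw [← sub_pos, show x + x⁻¹ - 2 = (1 - x) ^ 2 / x by field_simp; ring]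
        have : 0 < 1 - x := by linarith
        positivity
      exact div_lt_div_of_pos_right this h3
    · intro hy
      have hz : 2 < √3 * y := by rwa [Set.mem_Ioi, div_lt_iff₀' h3] at hy
      set z := √3 * y with hzd
      have hz4 : 0 < z ^ 2 - 4 := by nlinarith
      have hq : √(z ^ 2 - 4) ^ 2 = z ^ 2 - 4 := sq_sqrt hz4.le
      have hq0 := sqrt_pos.2 hz4
      set q := √(z ^ 2 - 4)
      have hqz : q < z := by nlinarith
      have hzq : z - 2 < q := by nlinarith
      refine ⟨(z - q) / 2, ⟨by linarith, by linarith⟩, ?_⟩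
      have hzq0 : z - q ≠ 0 := by linarith
      have : (z - q) / 2 + ((z - q) / 2)⁻¹ = z := by
        field_simp
        nlinarith
      simp only
      rw [this, hzd]
      field_simp
  rw [← himg, integral_image_eq_integral_abs_deriv_smul measurableSet_Ioo hd hinj,
    ← setIntegral_beta_sextic ha (by positivity : 0 < a + 1 / 6), ← integral_const_mul]
  refine setIntegral_congr_fun measurableSet_Ioo fun x hx => ?_
  obtain ⟨hx0, hx1⟩ := hx
  have hx1' : 0 < 1 - x := by linarith
  have e1 : (x + x⁻¹) / √3 - 2 / √3 = (1 - x) ^ 2 / (x * √3) := by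
    field_simp
    ring
  have e2 : ((x + x⁻¹) / √3) ^ 3 - (x + x⁻¹) / √3 = (1 + x ^ 6) / (x ^ 3 * (√3 * 3)) := by
    field_simp
    linear_combination (-x ^ 6 - 3 * x ^ 4 - 3 * x ^ 2 - 1) * hs3
  have e3 : |(1 + -(x ^ 2)⁻¹) / √3| = (1 - x) * (1 + x) / (x ^ 2 * √3) := by
    have : (1 + -(x ^ 2)⁻¹) / √3 = -((1 - x) * (1 + x) / (x ^ 2 * √3)) := by
      field_simp
      ring
    rw [this, abs_neg, abs_of_pos (by positivity)]
  simp only [smul_eq_mul, e1, e2, e3]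
  have f1 : ((1 - x) ^ 2 / (x * √3)) ^ (-(1 / 2) : ℝ) =
      x ^ (1 / 2 : ℝ) * 3 ^ (1 / 4 : ℝ) / (1 - x) := by
    rw [rpow_neg (by positivity), div_rpow (by positivity) (by positivity),
      mul_rpow hx0.le h3.le, ← rpow_natCast, ← rpow_mul hx1'.le, sqrt_eq_rpow,
      ← rpow_mul (by norm_num), inv_div]
    norm_num
  have f2 : ((1 + x ^ 6) / (x ^ 3 * (√3 * 3))) ^ (-(2 * a + 1 / 6)) =
      x ^ (6 * a + 1 / 2) * 3 ^ (3 * a + 1 / 4) * (1 + x ^ 6) ^ (-(a + (a + 1 / 6))) := by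
    have : √3 * 3 = (3 : ℝ) ^ (3 / 2 : ℝ) := by
      rw [sqrt_eq_rpow, ← rpow_add_one (by norm_num)]
      norm_num
    rw [this, div_rpow (by positivity) (by positivity), rpow_neg (by positivity : 0 ≤ x ^ 3 * _),
      div_inv_eq_mul, mul_rpow (by positivity) (by positivity), ← rpow_natCast x 3,
      ← rpow_mul hx0.le, ← rpow_mul (by norm_num), mul_comm,
      show ((3 : ℕ) : ℝ) * (2 * a + 1 / 6) = 6 * a + 1 / 2 by push_cast; ring,
      show 3 / 2 * (2 * a + 1 / 6) = 3 * a + 1 / 4 by ring,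
      show a + (a + 1 / 6) = 2 * a + 1 / 6 by ring]
  have g1 : x ^ (1 / 2 : ℝ) * x ^ (6 * a + 1 / 2) = x ^ (6 * a - 1) * x ^ 2 := by
    rw [← rpow_natCast x 2, ← rpow_add hx0, ← rpow_add hx0]
    congr 1
    push_cast
    ring
  have g2 : (3 : ℝ) ^ (1 / 4 : ℝ) * 3 ^ (3 * a + 1 / 4) = 3 ^ (3 * a) * √3 := by
    rw [sqrt_eq_rpow, ← rpow_add (by norm_num), ← rpow_add (by norm_num)]
    congr 1
    ring
  have g3 : x ^ (6 * (a + 1 / 6) - 1) = x ^ (6 * a - 1) * x := by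
    rw [← rpow_add_one hx0.ne']
    congr 1
    ring
  rw [f1, f2, g3]
  set U := (1 + x ^ 6) ^ (-(a + (a + 1 / 6)))
  calc _ = (x ^ (1 / 2 : ℝ) * x ^ (6 * a + 1 / 2)) * ((3 : ℝ) ^ (1 / 4 : ℝ) * 3 ^ (3 * a + 1 / 4)) *
        U * (1 + x) / (x ^ 2 * √3) := by
        field_simp
    _ = _ := by
        rw [g1, g2]
        field_simp

open MeasureTheory Set ProbabilityTheory in
lemma sq_setIntegral_cubic :
    (∫ v in Ioi (2 / √3), (1 + (√2 + 2 * √3 / 3) / √(v ^ 3 - v)) /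
        √((v - 2 / √3) * √(v ^ 3 - v))) ^ 2 =
      (√2 + 2 * √3 / 3) / (3 * √2 * π) *
        (Gamma (1 / 24) * Gamma (5 / 24) * Gamma (7 / 24) * Gamma (11 / 24)) := by
  have hs3 : √3 ^ 2 = 3 := sq_sqrt (by norm_num)
  set κ := √2 + 2 * √3 / 3 with hκ
  set J : ℝ → ℝ := fun p =>
    ∫ v in Ioi (2 / √3), (v - 2 / √3) ^ (-(1 / 2) : ℝ) * (v ^ 3 - v) ^ (-p) with hJ
  have h1 : J (1 / 4) = 3 ^ (1 / 8 : ℝ) / 6 * beta (1 / 24) (5 / 24) := by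
    have := setIntegral_cubic_eq_beta (a := 1 / 24) (by norm_num)
    norm_num at this
    simpa [hJ, neg_div] using this
  have h3 : J (3 / 4) = 3 ^ (7 / 8 : ℝ) / 6 * beta (7 / 24) (11 / 24) := by
    have := setIntegral_cubic_eq_beta (a := 7 / 24) (by norm_num)
    norm_num at this
    simpa [hJ, neg_div] using this
  have hb1 : 0 < beta (1 / 24) (5 / 24) := beta_pos (by norm_num) (by norm_num)
  have hb7 : 0 < beta (7 / 24) (11 / 24) := beta_pos (by norm_num) (by norm_num)
  have i1 : IntegrableOn (fun v : ℝ =>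
      (v - 2 / √3) ^ (-(1 / 2) : ℝ) * (v ^ 3 - v) ^ (-(1 / 4) : ℝ)) (Ioi (2 / √3)) :=
    .of_integral_ne_zero (by change J (1 / 4) ≠ 0; rw [h1]; positivity)
  have i3 : IntegrableOn (fun v : ℝ =>
      (v - 2 / √3) ^ (-(1 / 2) : ℝ) * (v ^ 3 - v) ^ (-(3 / 4) : ℝ)) (Ioi (2 / √3)) :=
    .of_integral_ne_zero (by change J (3 / 4) ≠ 0; rw [h3]; positivity)
  have hsum : (∫ v in Ioi (2 / √3), (1 + κ / √(v ^ 3 - v)) / √((v - 2 / √3) * √(v ^ 3 - v))) =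
      J (1 / 4) + κ * J (3 / 4) := by
    rw [hJ, ← integral_const_mul, ← integral_add i1 (i3.const_mul κ)]
    refine setIntegral_congr_fun measurableSet_Ioi fun v hv => ?_
    have hv1 : 1 < 2 / √3 := by
      rw [lt_div_iff₀ (by positivity), one_mul, sqrt_lt' (by norm_num)]
      norm_num
    have hv : 2 / √3 < v := hv
    have hX : 0 < v ^ 3 - v := by
      have : 0 < v * ((v - 1) * (v + 1)) := by
        have := sub_pos.2 (hv1.trans hv)
        have : 0 < v := by linarith
        positivity
      linarith
    have hy : 0 < v - 2 / √3 := sub_pos.2 hv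
    set X := v ^ 3 - v
    have e1 : X ^ (-(1 / 4) : ℝ) = 1 / √√X := by
      rw [rpow_neg hX.le, one_div, sqrt_eq_rpow, sqrt_eq_rpow, ← rpow_mul hX.le]
      norm_num
    have e3 : X ^ (-(3 / 4) : ℝ) = 1 / (√X * √√X) := by
      rw [rpow_neg hX.le, one_div, sqrt_eq_rpow, sqrt_eq_rpow, ← rpow_mul hX.le, ← rpow_add hX]
      norm_num
    rw [e1, e3, rpow_neg hy.le, ← sqrt_eq_rpow, sqrt_mul hy.le]
    have := sqrt_pos.2 hX
    have := sqrt_pos.2 this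
    have := sqrt_pos.2 hy
    field_simp
  have hrel : J (1 / 4) = κ * J (3 / 4) := by
    have e : (3 : ℝ) ^ (1 / 8 : ℝ) * 3 ^ (1 / 4 : ℝ) * √3 = 3 ^ (7 / 8 : ℝ) := by
      rw [sqrt_eq_rpow, ← rpow_add (by norm_num), ← rpow_add (by norm_num)]
      norm_num
    have e' : κ * √3 = √2 * (√3 + √2) := by
      have : √2 ^ 2 = 2 := sq_sqrt (by norm_num)
      rw [hκ]
      linear_combination 2 / 3 * hs3 - this
    rw [h1, h3, beta_ratio, ← e]
    linear_combination -(3 ^ (1 / 8 : ℝ) * 3 ^ (1 / 4 : ℝ) / 6 * beta (7 / 24) (11 / 24)) * e'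
  have hprod : J (1 / 4) * J (3 / 4) =
      1 / 12 * (beta (1 / 24) (5 / 24) * beta (7 / 24) (11 / 24)) := by
    have e : (3 : ℝ) ^ (1 / 8 : ℝ) * 3 ^ (7 / 8 : ℝ) = 3 := by
      rw [← rpow_add (by norm_num)]
      norm_num
    rw [h1, h3]
    linear_combination beta (1 / 24) (5 / 24) * beta (7 / 24) (11 / 24) / 36 * e
  rw [hsum, ← hrel]
  calc (J (1 / 4) + J (1 / 4)) ^ 2 = 4 * κ * (J (1 / 4) * J (3 / 4)) := by
        linear_combination 4 * J (1 / 4) * hrel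
    _ = _ := by
        rw [hprod, beta_mul_beta]
        field_simp
        ring

/-- The polynomial `∑ₖ C(n,k)² xᵏ`. -/
noncomputable def chooseSqSum (x : ℝ) (n : ℕ) : ℝ :=
  ∑ k ∈ range (n + 1), (n.choose k : ℝ) ^ 2 * x ^ k

lemma hasSum_chooseSqSum (x : ℝ) (n : ℕ) :
    HasSum (fun k => (n.choose k : ℝ) ^ 2 * x ^ k) (chooseSqSum x n) :=
  hasSum_sum_of_ne_finset_zero fun k hk => by
    rw [Nat.choose_eq_zero_of_lt (by simpa using hk)]
    simp

lemma cast_choose_succ_mul (n k : ℕ) :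
    (n.choose (k + 1) : ℝ) * (k + 1) = n.choose k * (n - k) := by
  rcases le_or_gt k n with h | h
  · rw [← Nat.cast_sub h]
    exact_mod_cast Nat.choose_succ_right_eq n k
  · rw [Nat.choose_eq_zero_of_lt h, Nat.choose_eq_zero_of_lt (h.trans k.lt_succ_self)]
    simp

lemma choose_sq_recurrence (n k : ℕ) :
    ((n : ℝ) + 2) * ((n + 2).choose (k + 2) : ℝ) ^ 2 =
      (2 * n + 3) * (((n + 1).choose (k + 2) : ℝ) ^ 2 + ((n + 1).choose (k + 1) : ℝ) ^ 2) -
        (n + 1) * ((n.choose (k + 2) : ℝ) ^ 2 - 2 * (n.choose (k + 1) : ℝ) ^ 2 +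
          (n.choose k : ℝ) ^ 2) := by
  have h1 := cast_choose_succ_mul n k
  have h2 := cast_choose_succ_mul n (k + 1)
  push_cast at h2
  simp only [Nat.choose_succ_succ', Nat.cast_add]
  set a : ℝ := (n.choose (k + 2) : ℝ)
  set b : ℝ := (n.choose (k + 1) : ℝ)
  set c : ℝ := (n.choose k : ℝ)
  have hb : b = c * (n - k) / (k + 1) := by
    rw [eq_div_iff (by positivity)]
    exact h1
  have ha : a = b * (n - (k + 1)) / (k + 2) := by
    rw [eq_div_iff (by positivity)]
    linear_combination h2
  rw [ha, hb]
  field_simp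
  ring

lemma chooseSqSum_recurrence (x : ℝ) (n : ℕ) :
    ((n : ℝ) + 2) * chooseSqSum x (n + 2) =
      (2 * n + 3) * (1 + x) * chooseSqSum x (n + 1) - (n + 1) * (1 - x) ^ 2 * chooseSqSum x n := by
  have h0 := hasSum_chooseSqSum x n
  have h1 := hasSum_chooseSqSum x (n + 1)
  have h2 := hasSum_chooseSqSum x (n + 2)
  have s0 := hasSum_coeffShift h0
  have s1 := hasSum_coeffShift h1
  have t0 := hasSum_coeffShift s0
  have key := (h2.mul_left ((n : ℝ) + 2)).sub (((h1.add s1).mul_left (2 * n + 3 : ℝ)).sub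
    (((h0.sub (s0.mul_left 2)).add t0).mul_left (n + 1 : ℝ)))
  have hz := key.unique (hasSum_zero.congr_fun fun k => ?_)
  · linear_combination hz
  · rcases k with _ | _ | k
    · simp [coeffShift]
      ring
    · simp [coeffShift]
      ring
    · have h := choose_sq_recurrence n k
      simp only [coeffShift]
      linear_combination x ^ (k + 2) * h

lemma chooseSqSum_nonneg {x : ℝ} (hx : 0 ≤ x) (n : ℕ) : 0 ≤ chooseSqSum x n :=
  Finset.sum_nonneg fun _ _ => by positivity

lemma chooseSqSum_le {x : ℝ} (hx : 0 ≤ x) (hx4 : x ≤ 4) (n : ℕ) : chooseSqSum x n ≤ 9 ^ n := by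
  have h3 : ∑ k ∈ range (n + 1), (n.choose k : ℝ) * 2 ^ k = 3 ^ n := by
    have := add_pow (2 : ℝ) 1 n
    norm_num at this
    rw [this]
    exact Finset.sum_congr rfl fun k _ => mul_comm _ _
  calc chooseSqSum x n ≤ ∑ k ∈ range (n + 1), ((n.choose k : ℝ) * 2 ^ k) ^ 2 := by
        refine Finset.sum_le_sum fun k _ => ?_
        calc _ ≤ (n.choose k : ℝ) ^ 2 * 4 ^ k := by gcongr
          _ = _ := by rw [mul_pow, ← pow_mul, mul_comm k 2, pow_mul]; norm_num
    _ ≤ (∑ k ∈ range (n + 1), (n.choose k : ℝ) * 2 ^ k) ^ 2 :=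
        Finset.sum_sq_le_sq_sum_of_nonneg fun _ _ => by positivity
    _ = 9 ^ n := by rw [h3, ← pow_mul, mul_comm, pow_mul]; norm_num

lemma chooseSqSum_cauchyBounded {x : ℝ} (hx : 0 ≤ x) (hx4 : x ≤ 4) :
    CauchyBounded (1 / 9) (chooseSqSum x) := by
  rw [one_div]
  exact cauchyBounded_of_abs_le (by norm_num) fun n => by
    rw [abs_of_nonneg (chooseSqSum_nonneg hx n)]
    exact chooseSqSum_le hx hx4 n

lemma powSum_chooseSqSum_ode {x : ℝ} (hx : 0 ≤ x) (hx4 : x ≤ 4) {w : ℝ} (hw : |w| < 1 / 9) :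
    (1 - 2 * (1 + x) * w + (1 - x) ^ 2 * w ^ 2) * powSum (eulerCoeff (chooseSqSum x)) w =
      ((1 + x) * w - (1 - x) ^ 2 * w ^ 2) * powSum (chooseSqSum x) w := by
  have c0 := chooseSqSum_cauchyBounded hx hx4
  have h0 := c0.hasSum hw
  have h1 := c0.euler.hasSum hw
  have s0 := hasSum_coeffShift h0
  have s1 := hasSum_coeffShift h1
  have t0 := hasSum_coeffShift s0
  have t1 := hasSum_coeffShift s1
  have key := (h1.sub ((s1.mul_left (2 * (1 + x))).add (s0.mul_left (1 + x)))).add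
    ((t1.mul_left ((1 - x) ^ 2)).add (t0.mul_left ((1 - x) ^ 2)))
  have hz := key.unique (hasSum_zero.congr_fun fun n => ?_)
  · linear_combination hz
  · rcases n with _ | _ | n
    · simp [coeffShift, eulerCoeff]
    · simp [coeffShift, eulerCoeff, chooseSqSum, Finset.sum_range_succ]
    · have h := chooseSqSum_recurrence x n
      simp only [coeffShift, eulerCoeff]
      push_cast
      linear_combination w ^ (n + 2) * h

lemma sq_powSum_chooseSqSum {x : ℝ} (hx : 0 ≤ x) (hx4 : x ≤ 4) {w : ℝ} (hw0 : 0 ≤ w)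
    (hw : w < 1 / 9) :
    powSum (chooseSqSum x) w ^ 2 * (1 - 2 * (1 + x) * w + (1 - x) ^ 2 * w ^ 2) = 1 := by
  have c0 := chooseSqSum_cauchyBounded hx hx4
  have habs : ∀ y ∈ Set.Icc 0 w, |y| < 1 / 9 := fun y hy => by
    rw [abs_of_nonneg hy.1]
    exact hy.2.trans_lt hw
  let F : ℝ → ℝ := fun y =>
    powSum (chooseSqSum x) y ^ 2 * (1 - 2 * (1 + x) * y + (1 - x) ^ 2 * y ^ 2)
  have hcont : ContinuousOn F (Set.Icc 0 w) := by
    have : ContinuousOn (powSum (chooseSqSum x)) (Set.Icc 0 w) := fun y hy =>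
      (c0.analyticAt (habs y hy)).continuousAt.continuousWithinAt
    fun_prop
  rcases hw0.eq_or_lt with rfl | hw0
  · simp [powSum_zero, chooseSqSum]
  have hd : ∀ y ∈ Set.Ioo 0 w, HasDerivAt F 0 y := fun y hy => by
    have hy' := habs y ⟨hy.1.le, hy.2.le⟩
    have h1 := c0.hasDerivAt hy.1.ne' hy'
    have h2 : HasDerivAt (fun y : ℝ => 1 - 2 * (1 + x) * y + (1 - x) ^ 2 * y ^ 2)
        (-(2 * (1 + x)) + (1 - x) ^ 2 * (2 * y)) y := by
      have := (((hasDerivAt_id y).const_mul (2 * (1 + x))).const_sub 1).add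
        ((hasDerivAt_pow 2 y).const_mul ((1 - x) ^ 2))
      refine this.congr_deriv ?_
      norm_num
    refine ((h1.pow 2).mul h2).congr_deriv ?_
    have ode := powSum_chooseSqSum_ode hx hx4 hy'
    have := hy.1.ne'
    simp only [Pi.pow_apply]
    field_simp
    push_cast
    linear_combination 2 * powSum (chooseSqSum x) y * ode
  obtain ⟨y, hy, hy'⟩ := exists_hasDerivAt_eq_slope F (fun _ => 0) hw0 hcont hd
  have h0 : F 0 = 1 := by simp [F, powSum_zero, chooseSqSum]
  have : F w = F 0 := by
    have := hy'.symm
    rw [div_eq_zero_iff] at this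
    rcases this with h | h <;> linarith
  exact this.trans h0

lemma integral_four_mul_sin_sq_pow (k : ℕ) :
    ∫ t in (0 : ℝ)..π, (4 * sin t ^ 2) ^ k = π * (Nat.centralBinom k : ℝ) := by
  have h : ∀ k : ℕ, (4 : ℝ) ^ k * ∏ i ∈ range k, (2 * (i : ℝ) + 1) / (2 * i + 2) =
      Nat.centralBinom k := fun k => by
    induction k with
    | zero => simp
    | succ k ih =>
      have := cast_centralBinom_succ k
      have e : (4 : ℝ) * ((2 * (k : ℝ) + 1) / (2 * k + 2)) = 2 * (2 * k + 1) / (k + 1) := by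
        field_simp
        ring
      rw [Finset.prod_range_succ, pow_succ, mul_mul_mul_comm, ih, e, mul_div_assoc', div_eq_iff
        (by positivity)]
      linear_combination -this
  simp_rw [mul_pow, ← pow_mul]
  rw [intervalIntegral.integral_const_mul, integral_sin_pow_even, ← h]
  ring

lemma integral_chooseSqSum (n : ℕ) :
    ∫ t in (0 : ℝ)..π, chooseSqSum (4 * sin t ^ 2) n = π * honeycomb n := by
  simp only [chooseSqSum, honeycomb, Finset.mul_sum]
  rw [intervalIntegral.integral_finsetSum fun k _ =>
    Continuous.intervalIntegrable (by fun_prop) _ _]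
  refine Finset.sum_congr rfl fun k _ => ?_
  rw [intervalIntegral.integral_const_mul, integral_four_mul_sin_sq_pow]
  ring

lemma powSum_chooseSqSum_eq {x : ℝ} (hx : 0 ≤ x) (hx4 : x ≤ 4) {w : ℝ} (hw0 : 0 ≤ w)
    (hw : w < 1 / 9) :
    powSum (chooseSqSum x) w = 1 / √(1 - 2 * (1 + x) * w + (1 - x) ^ 2 * w ^ 2) := by
  have h := sq_powSum_chooseSqSum hx hx4 hw0 hw
  set G := powSum (chooseSqSum x) w with hG
  have hG0 : 0 ≤ G := tsum_nonneg fun n => mul_nonneg (chooseSqSum_nonneg hx n) (pow_nonneg hw0 n)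
  set Q := 1 - 2 * (1 + x) * w + (1 - x) ^ 2 * w ^ 2
  have hQ : 0 < Q := by
    by_contra hQ
    nlinarith [sq_nonneg G]
  rw [eq_div_iff (sqrt_pos.2 hQ).ne', ← sqrt_sq hG0, ← sqrt_mul (sq_nonneg G), h, sqrt_one]

lemma powSum_honeycomb_eq_integral {w : ℝ} (hw0 : 0 ≤ w) (hw : w < 1 / 9) :
    π * powSum honeycomb w = ∫ t in (0 : ℝ)..π,
      1 / √(1 - 2 * (1 + 4 * sin t ^ 2) * w + (1 - 4 * sin t ^ 2) ^ 2 * w ^ 2) := by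
  have hx : ∀ t : ℝ, 0 ≤ 4 * sin t ^ 2 := fun t => by positivity
  have hx4 : ∀ t : ℝ, 4 * sin t ^ 2 ≤ 4 := fun t => by nlinarith [sin_sq_le_one t]
  have habs : |w| < 1 / 9 := by rwa [abs_of_nonneg hw0]
  have hsum : HasSum (fun n => ∫ t in (0 : ℝ)..π, chooseSqSum (4 * sin t ^ 2) n * w ^ n)
      (∫ t in (0 : ℝ)..π, powSum (chooseSqSum (4 * sin t ^ 2)) w) := by
    have hgeo : Summable fun n : ℕ => (9 * w) ^ n :=
      summable_geometric_of_lt_one (by positivity) (by linarith)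
    refine intervalIntegral.hasSum_integral_of_dominated_convergence
      (fun n _ => (9 * w) ^ n) (fun n => ?_) (fun n => ?_) ?_ ?_ ?_
    · refine Continuous.aestronglyMeasurable ?_
      simp only [chooseSqSum]
      fun_prop
    · refine Filter.Eventually.of_forall fun t _ => ?_
      rw [Real.norm_eq_abs, abs_of_nonneg
        (mul_nonneg (chooseSqSum_nonneg (hx t) n) (pow_nonneg hw0 n)), mul_pow]
      exact mul_le_mul_of_nonneg_right (chooseSqSum_le (hx t) (hx4 t) n) (pow_nonneg hw0 n)
    · exact Filter.Eventually.of_forall fun t _ => hgeo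
    · exact continuous_const.intervalIntegrable _ _
    · exact Filter.Eventually.of_forall fun t _ =>
        (chooseSqSum_cauchyBounded (hx t) (hx4 t)).hasSum habs
  have hsum' := (honeycomb_cauchyBounded.hasSum habs).mul_left π
  have := hsum'.unique (hsum.congr_fun fun n => ?_)
  · rw [this]
    exact intervalIntegral.integral_congr fun t _ =>
      powSum_chooseSqSum_eq (hx t) (hx4 t) hw0 hw
  · rw [intervalIntegral.integral_mul_const, integral_chooseSqSum]
    ring

open MeasureTheory in
lemma powSum_honeycomb_eq_setIntegral {w : ℝ} (hw0 : 0 ≤ w) (hw : w < 1 / 9) :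
    π * powSum honeycomb w = ∫ t in Set.Ioo (-(π / 2)) (π / 2),
      1 / √(1 - 2 * (1 + 4 * sin t ^ 2) * w + (1 - 4 * sin t ^ 2) ^ 2 * w ^ 2) := by
  have hp : Function.Periodic (fun t : ℝ =>
      1 / √(1 - 2 * (1 + 4 * sin t ^ 2) * w + (1 - 4 * sin t ^ 2) ^ 2 * w ^ 2)) π := fun t => by
    simp only [sin_add_pi, neg_sq]
  have := hp.intervalIntegral_add_eq 0 (-(π / 2))
  rw [zero_add, show -(π / 2) + π = π / 2 by ring] at this
  rw [powSum_honeycomb_eq_integral hw0 hw, this,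
    intervalIntegral.integral_of_le (by linarith [pi_pos]), integral_Ioc_eq_integral_Ioo]

/-- The quadratic factor of the numerator of `tanParam`, with `a = √2` and `b = √3`. -/
noncomputable def paramNumer (a b v : ℝ) : ℝ :=
  v ^ 2 - (8 + 5 * a - 3 * b - 3 * (a * b)) * v + (-4 - 2 * a + 2 * b + 2 * (a * b))

/-- The linear factor in the denominator `X + v * paramSlope a b v` of `tanParam`. -/
noncomputable def paramSlope (a b v : ℝ) : ℝ := -(a / 2 + b) + (1 + a * b / 2) * v

/-- The square of the denominator of `tanParam` divided by `v`, where `X ^ 2 = v ^ 3 - v`. -/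
noncomputable def paramDenom (a b v X : ℝ) : ℝ :=
  v ^ 2 - 1 + v * paramSlope a b v ^ 2 + 2 * X * paramSlope a b v

/-- The cofactor of `X + (a + 2 * b / 3)` in the numerator of the derivative of `tanParam`. -/
noncomputable def paramCofactor (a b v X : ℝ) : ℝ :=
  ((40 + 40 * a - 32 * b - 16 * (a * b)) * v + (60 + 38 * a - 34 * b - 26 * (a * b)) * v ^ 2 +
    (33 + 15 * a - 10 * b - 9 * (a * b)) * v ^ 3 + (6 + 3 * a - 8 * b - 3 * (a * b)) * v ^ 4 +
    3 * v ^ 5) +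
  ((20 + 10 * a - 8 * b - 8 * (a * b)) + (-18 - 5 * a + 2 * b + 7 * (a * b)) * v +
    (-10 - 13 * a + 11 * b + 15 / 2 * (a * b)) * v ^ 2 + (-5 - 4 * a - b + 2 * (a * b)) * v ^ 3 +
    (1 + (a * b) / 2) * v ^ 4) * X

set_option maxHeartbeats 4000000 in
lemma paramCofactor_mul {a b v X : ℝ} (ha : a ^ 2 = 2) (hb : b ^ 2 = 3)
    (hX : X ^ 2 = v ^ 3 - v) :
    2 * ((3 * v ^ 2 - 1) * (v - 2 * b / 3) / 2 + (v ^ 2 - 1) * (v - 2 * b / 3) -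
        v * (v + 1) * (v - 2 * b / 3) - X ^ 2) * paramNumer a b v * (X + v * paramSlope a b v) +
      4 * X ^ 2 * (v - 2 * b / 3) *
        ((2 * v - (8 + 5 * a - 3 * b - 3 * (a * b))) * (X + v * paramSlope a b v) -
          paramNumer a b v * (paramSlope a b v + v * (1 + a * b / 2))) -
      2 * X * (v - 2 * b / 3) * paramNumer a b v * (3 * v ^ 2 - 1) =
    (X + (a + 2 * b / 3)) * paramCofactor a b v X := by
  simp only [paramNumer, paramSlope, paramCofactor]
  have b3 : b ^ 3 = 3 * b := by rw [pow_succ, hb]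
  have X3 : X ^ 3 = (v ^ 3 - v) * X := by rw [pow_succ, hX]
  ring_nf
  simp only [ha, hb, hX, b3, X3]
  ring

set_option maxRecDepth 1000000 in
set_option maxHeartbeats 4000000 in
lemma sq_paramCofactor {a b v X : ℝ} (ha : a ^ 2 = 2) (hb : b ^ 2 = 3)
    (hX : X ^ 2 = v ^ 3 - v) :
    (8 - 6 * a + 6 * b - 4 * (a * b)) * v *
      ((17 + 12 * a) / 2 * (v - 1) * (v - 2 * b / 3) ^ 2 * paramDenom a b v X ^ 2 +
        (12 + 9 * a) * (v - 2 * b / 3) * ((9 * b + 11 * a) / 6) * paramNumer a b v ^ 2 * X *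
          paramDenom a b v X +
        (9 + 6 * a) / 2 * ((9 * b + 11 * a) / 6) ^ 2 * paramNumer a b v ^ 4 * v * (v + 1)) =
      (9 * b + 11 * a) / 6 * paramCofactor a b v X ^ 2 := by
  have a3 : a ^ 3 = 2 * a := by rw [pow_succ, ha]
  have a4 : a ^ 4 = 4 := by rw [show a ^ 4 = (a ^ 2) ^ 2 by ring, ha]; norm_num
  have a5 : a ^ 5 = 4 * a := by rw [pow_succ, a4]
  have a6 : a ^ 6 = 8 := by rw [show a ^ 6 = (a ^ 2) ^ 3 by ring, ha]; norm_num
  have a7 : a ^ 7 = 8 * a := by rw [pow_succ, a6]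
  have a8 : a ^ 8 = 16 := by rw [show a ^ 8 = (a ^ 2) ^ 4 by ring, ha]; norm_num
  have b3 : b ^ 3 = 3 * b := by rw [pow_succ, hb]
  have b4 : b ^ 4 = 9 := by rw [show b ^ 4 = (b ^ 2) ^ 2 by ring, hb]; norm_num
  have b5 : b ^ 5 = 9 * b := by rw [pow_succ, b4]
  have b6 : b ^ 6 = 27 := by rw [show b ^ 6 = (b ^ 2) ^ 3 by ring, hb]; norm_num
  have b7 : b ^ 7 = 27 * b := by rw [pow_succ, b6]
  simp only [paramNumer, paramSlope, paramCofactor, paramDenom]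
  ring_nf
  simp only [ha, hb, hX, a3, a4, a5, a6, a7, a8, b3, b4, b5, b6, b7]
  ring

/-- The substitution `t = tanParam v`, with `t = tan ψ`, carrying `Ioi (2√3/3)` onto `ℝ`. -/
noncomputable def tanParam (v : ℝ) : ℝ :=
  √((9 * √3 + 11 * √2) / 6 * √(v ^ 3 - v) * v / ((v - 1) * (v - 2 * √3 / 3))) *
    paramNumer √2 √3 v / (√(v ^ 3 - v) + v * paramSlope √2 √3 v)

lemma sqrt_two_bounds : 1.41421 < √2 ∧ √2 < 1.41422 := by
  constructor
  · exact Real.lt_sqrt_of_sq_lt (by norm_num)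
  · exact (Real.sqrt_lt' (by norm_num)).2 (by norm_num)

lemma sqrt_three_bounds : 1.73205 < √3 ∧ √3 < 1.73206 := by
  constructor
  · exact Real.lt_sqrt_of_sq_lt (by norm_num)
  · exact (Real.sqrt_lt' (by norm_num)).2 (by norm_num)

lemma sqrt_two_mul_sqrt_three_bounds : 2.44948 < √2 * √3 ∧ √2 * √3 < 2.4495 := by
  rw [← Real.sqrt_mul (by norm_num)]
  constructor
  · exact Real.lt_sqrt_of_sq_lt (by norm_num)
  · exact (Real.sqrt_lt' (by norm_num)).2 (by norm_num)

lemma one_lt_of_mem {v : ℝ} (hv : 2 * √3 / 3 < v) : 1 < v := by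
  have := sqrt_three_bounds.1
  linarith

lemma sqrt_cubic_pos {v : ℝ} (hv : 1 < v) : 0 < √(v ^ 3 - v) := by
  refine Real.sqrt_pos.2 ?_
  nlinarith [mul_pos (show (0:ℝ) < v by linarith) (show 0 < v ^ 2 - 1 by nlinarith)]

lemma sq_sqrt_cubic {v : ℝ} (hv : 1 < v) : √(v ^ 3 - v) ^ 2 = v ^ 3 - v :=
  Real.sq_sqrt (Real.sqrt_pos.1 (sqrt_cubic_pos hv)).le

lemma paramSlope_pos {v : ℝ} (hv : 2 * √3 / 3 ≤ v) : 0 < paramSlope √2 √3 v := by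
  have h2 := sqrt_two_bounds
  have h3 := sqrt_three_bounds
  have h6 := sqrt_two_mul_sqrt_three_bounds
  unfold paramSlope
  nlinarith

lemma sq_sqrt_add_mul_paramSlope {v : ℝ} (hv : 1 < v) :
    (√(v ^ 3 - v) + v * paramSlope √2 √3 v) ^ 2 = v * paramDenom √2 √3 v √(v ^ 3 - v) := by
  have h := sq_sqrt_cubic hv
  unfold paramDenom
  linear_combination h

lemma hasDerivAt_tanParam {v : ℝ} (hv : 2 * √3 / 3 < v) :
    HasDerivAt tanParam
      (√((9 * √3 + 11 * √2) / 6 * √(v ^ 3 - v) * v / ((v - 1) * (v - 2 * √3 / 3))) *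
        ((√(v ^ 3 - v) + (√2 + 2 * √3 / 3)) * paramCofactor √2 √3 v √(v ^ 3 - v)) /
        (4 * √(v ^ 3 - v) ^ 2 * (v - 2 * √3 / 3) *
          (√(v ^ 3 - v) + v * paramSlope √2 √3 v) ^ 2)) v := by
  have h1 := one_lt_of_mem hv
  have hX := sqrt_cubic_pos h1
  have hX2 := sq_sqrt_cubic h1
  have hM := paramSlope_pos hv.le
  have hd : 0 < √(v ^ 3 - v) + v * paramSlope √2 √3 v := by positivity
  have hid := paramCofactor_mul (a := √2) (b := √3) (Real.sq_sqrt (by norm_num))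
    (Real.sq_sqrt (by norm_num)) hX2
  have hw : 0 < v - 2 * √3 / 3 := by linarith
  have hv1 : 0 < v - 1 := by linarith
  have dX : HasDerivAt (fun v : ℝ => √(v ^ 3 - v)) ((3 * v ^ 2 - 1) / (2 * √(v ^ 3 - v))) v := by
    have := ((hasDerivAt_pow 3 v).sub (hasDerivAt_id v)).sqrt
      (by simpa using (Real.sqrt_pos.1 hX).ne')
    simpa using this
  have dh : HasDerivAt (fun v : ℝ => (9 * √3 + 11 * √2) / 6 * √(v ^ 3 - v) * v /
      ((v - 1) * (v - 2 * √3 / 3))) ((9 * √3 + 11 * √2) / 6 * √(v ^ 3 - v) * v /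
      ((v - 1) * (v - 2 * √3 / 3)) * ((3 * v ^ 2 - 1) / (2 * √(v ^ 3 - v)) / √(v ^ 3 - v) + 1 / v
        - 1 / (v - 1) - 1 / (v - 2 * √3 / 3))) v := by
    have := ((dX.const_mul ((9 * √3 + 11 * √2) / 6)).mul (hasDerivAt_id v)).div
      (((hasDerivAt_id v).sub_const 1).mul ((hasDerivAt_id v).sub_const (2 * √3 / 3)))
      (mul_pos hv1 hw).ne'
    refine HasDerivAt.congr_deriv this ?_
    simp only [id, Pi.mul_apply]
    generalize √(v ^ 3 - v) = X at *
    generalize 2 * √3 / 3 = w at *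
    field_simp
    ring
  have hh : 0 < (9 * √3 + 11 * √2) / 6 * √(v ^ 3 - v) * v / ((v - 1) * (v - 2 * √3 / 3)) := by
    positivity
  have dr : HasDerivAt (fun v => paramNumer √2 √3 v)
      (2 * v - (8 + 5 * √2 - 3 * √3 - 3 * (√2 * √3))) v := by
    unfold paramNumer
    have := (((hasDerivAt_pow 2 v).sub ((hasDerivAt_id v).const_mul
      (8 + 5 * √2 - 3 * √3 - 3 * (√2 * √3)))).add_const (-4 - 2 * √2 + 2 * √3 + 2 * (√2 * √3)))
    simpa using this
  have dM : HasDerivAt (fun v => v * paramSlope √2 √3 v)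
      (paramSlope √2 √3 v + v * (1 + √2 * √3 / 2)) v := by
    have : HasDerivAt (fun v => paramSlope √2 √3 v) (1 + √2 * √3 / 2) v := by
      unfold paramSlope
      simpa using ((hasDerivAt_id v).const_mul (1 + √2 * √3 / 2)).const_add (-(√2 / 2 + √3))
    exact ((hasDerivAt_id v).mul this).congr_deriv (by simp)
  have := ((dh.sqrt hh.ne').mul dr).div (dX.add dM) hd.ne'
  refine HasDerivAt.congr_deriv this ?_
  simp only [Pi.mul_apply, Pi.add_apply]
  rw [← hid]
  set h := (9 * √3 + 11 * √2) / 6 * √(v ^ 3 - v) * v / ((v - 1) * (v - 2 * √3 / 3)) with hdef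
  have hs : h = √h ^ 2 := (Real.sq_sqrt hh.le).symm
  have hsp : 0 < √h := Real.sqrt_pos.2 hh
  clear_value h
  generalize √h = H at *
  subst hs
  generalize √(v ^ 3 - v) = X at *
  generalize 2 * √3 / 3 = w at *
  generalize paramNumer √2 √3 v = r at *
  generalize paramSlope √2 √3 v = M at *
  have e : 2 * ((3 * v ^ 2 - 1) * (v - w) / 2 + (v ^ 2 - 1) * (v - w) - v * (v + 1) * (v - w)
      - X ^ 2) = 2 * X ^ 2 * (v - w) * ((3 * v ^ 2 - 1) / (2 * X) / X + 1 / v - 1 / (v - 1)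
        - 1 / (v - w)) := by
    have e1 : X ^ 2 * (1 / v) = v ^ 2 - 1 := by rw [hX2]; field_simp
    have e2 : X ^ 2 * (1 / (v - 1)) = v * (v + 1) := by rw [hX2]; field_simp; ring
    have e3 : (v - w) * (1 / (v - w)) = 1 := by field_simp
    have e4 : X ^ 2 * ((3 * v ^ 2 - 1) / (2 * X) / X) = (3 * v ^ 2 - 1) / 2 := by field_simp
    linear_combination -2 * (v - w) * e4 - 2 * (v - w) * e1 + 2 * (v - w) * e2 + 2 * X ^ 2 * e3
  rw [e]
  generalize (3 * v ^ 2 - 1) / (2 * X) / X + 1 / v - 1 / (v - 1) - 1 / (v - w) = g at *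
  field_simp
  ring

lemma paramDenom_pos {v : ℝ} (hv : 2 * √3 / 3 < v) : 0 < paramDenom √2 √3 v √(v ^ 3 - v) := by
  have h1 := one_lt_of_mem hv
  have hX := sqrt_cubic_pos h1
  have hM := paramSlope_pos hv.le
  have h : 0 < v * paramDenom √2 √3 v √(v ^ 3 - v) := by
    rw [← sq_sqrt_add_mul_paramSlope h1]
    positivity
  exact pos_of_mul_pos_right h (by linarith)

lemma sq_tanParam {v : ℝ} (hv : 2 * √3 / 3 < v) :
    tanParam v ^ 2 = (9 * √3 + 11 * √2) / 6 * √(v ^ 3 - v) * paramNumer √2 √3 v ^ 2 /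
      ((v - 1) * (v - 2 * √3 / 3) * paramDenom √2 √3 v √(v ^ 3 - v)) := by
  have h1 := one_lt_of_mem hv
  have hX := sqrt_cubic_pos h1
  have hw : 0 < v - 2 * √3 / 3 := by linarith
  have hv1 : 0 < v - 1 := by linarith
  have hN := paramDenom_pos hv
  unfold tanParam
  rw [div_pow, mul_pow, sq_sqrt_add_mul_paramSlope h1, Real.sq_sqrt (by positivity)]
  generalize √(v ^ 3 - v) = X at *
  generalize 2 * √3 / 3 = w at *
  field_simp

lemma paramConst_pos : 0 < 8 - 6 * √2 + 6 * √3 - 4 * (√2 * √3) := by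
  have h2 := sqrt_two_bounds
  have h3 := sqrt_three_bounds
  have h6 := sqrt_two_mul_sqrt_three_bounds
  linarith

lemma sq_deriv_tanParam {v : ℝ} (hv : 2 * √3 / 3 < v) :
    deriv tanParam v ^ 2 * ((v - 2 * √3 / 3) * √(v ^ 3 - v) ^ 3) =
      (8 - 6 * √2 + 6 * √3 - 4 * (√2 * √3)) / 16 * (√(v ^ 3 - v) + (√2 + 2 * √3 / 3)) ^ 2 *
        ((17 + 12 * √2) / 2 + (12 + 9 * √2) * tanParam v ^ 2 +
          (9 + 6 * √2) / 2 * (tanParam v ^ 2) ^ 2) := by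
  have h1 := one_lt_of_mem hv
  have hX := sqrt_cubic_pos h1
  have hX2 := sq_sqrt_cubic h1
  have hw : 0 < v - 2 * √3 / 3 := by linarith
  have hv1 : 0 < v - 1 := by linarith
  have hN := paramDenom_pos hv
  have hid := sq_paramCofactor (a := √2) (b := √3) (Real.sq_sqrt (by norm_num))
    (Real.sq_sqrt (by norm_num)) hX2
  rw [(hasDerivAt_tanParam hv).deriv, sq_tanParam hv, div_pow, mul_pow,
    Real.sq_sqrt (by positivity), mul_pow _ (_ ^ 2) 2, sq_sqrt_add_mul_paramSlope h1]
  generalize (9 * √3 + 11 * √2) / 6 = C at *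
  generalize √2 + 2 * √3 / 3 = κ at *
  generalize 2 * √3 / 3 = w at *
  generalize 8 - 6 * √2 + 6 * √3 - 4 * (√2 * √3) = K at *
  generalize (17 + 12 * √2) / 2 = γ₀ at *
  generalize (12 + 9 * √2) = γ₁ at *
  generalize (9 + 6 * √2) / 2 = γ₂ at *
  generalize √(v ^ 3 - v) = X at *
  generalize paramDenom √2 √3 v X = N at *
  generalize paramCofactor √2 √3 v X = E at *
  generalize paramNumer √2 √3 v = r at *
  have hs : γ₂ * (C * X * r ^ 2 / ((v - 1) * (v - w) * N)) ^ 2 =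
      γ₂ * (C ^ 2 * (v * (v + 1)) * r ^ 4 / ((v - 1) * (v - w) ^ 2 * N ^ 2)) := by
    have : X ^ 2 = (v - 1) * (v * (v + 1)) := by rw [hX2]; ring
    field_simp
    rw [this]
    ring
  rw [hs]
  trans (X + κ) ^ 2 / (16 * (v - 1) * (v - w) ^ 2 * v * N ^ 2) * (C * E ^ 2)
  · field_simp
    ring
  · rw [← hid]
    field_simp

lemma deriv_tanParam_ne_zero {v : ℝ} (hv : 2 * √3 / 3 < v) : deriv tanParam v ≠ 0 := by
  intro h
  have h1 := one_lt_of_mem hv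
  have hX := sqrt_cubic_pos h1
  have hK := paramConst_pos
  have := sq_deriv_tanParam hv
  rw [h] at this
  have h2 : 0 < (8 - 6 * √2 + 6 * √3 - 4 * (√2 * √3)) / 16 *
      (√(v ^ 3 - v) + (√2 + 2 * √3 / 3)) ^ 2 *
        ((17 + 12 * √2) / 2 + (12 + 9 * √2) * tanParam v ^ 2 +
          (9 + 6 * √2) / 2 * (tanParam v ^ 2) ^ 2) := by positivity
  rw [← this] at h2
  simp at h2

lemma continuousOn_tanParam : ContinuousOn tanParam (Set.Ioi (2 * √3 / 3)) :=
  fun _ hv => (hasDerivAt_tanParam hv).continuousAt.continuousWithinAt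

lemma injOn_tanParam : Set.InjOn tanParam (Set.Ioi (2 * √3 / 3)) := by
  have key : ∀ x ∈ Set.Ioi (2 * √3 / 3), ∀ y ∈ Set.Ioi (2 * √3 / 3), x < y →
      tanParam x ≠ tanParam y := by
    intro x hx y hy hxy h
    obtain ⟨z, hz, hz0⟩ := exists_deriv_eq_zero hxy
      (continuousOn_tanParam.mono fun t ht => lt_of_lt_of_le hx ht.1) h
    exact deriv_tanParam_ne_zero (lt_trans hx hz.1) hz0
  intro x hx y hy h
  rcases lt_trichotomy x y with hxy | hxy | hxy
  · exact absurd h (key x hx y hy hxy)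
  · exact hxy
  · exact absurd h.symm (key y hy x hx hxy)

open Filter Topology in
lemma tendsto_tanParam_nhdsGT : Tendsto tanParam (𝓝[>] (2 * √3 / 3)) atBot := by
  have h1 : 1 < 2 * √3 / 3 := by
    have := sqrt_three_bounds.1
    linarith
  have hM := paramSlope_pos le_rfl
  have hX := sqrt_cubic_pos h1
  have hr : paramNumer √2 √3 (2 * √3 / 3) < 0 := by
    have h2 := sqrt_two_bounds
    have h3 := sqrt_three_bounds
    have h6 := sqrt_two_mul_sqrt_three_bounds
    have hb : √3 ^ 2 = 3 := Real.sq_sqrt (by norm_num)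
    have : paramNumer √2 √3 (2 * √3 / 3) = 10 / 3 + 4 * √2 - 10 * √3 / 3 - 4 * (√2 * √3) / 3 := by
      unfold paramNumer
      linear_combination (22 / 9 + 2 * √2) * hb
    rw [this]
    linarith
  set w := 2 * √3 / 3 with hw
  clear_value w
  have hv1 : 0 < w - 1 := by linarith
  have t1 : Tendsto (fun v => (v - w)⁻¹) (𝓝[>] w) atTop := by
    refine tendsto_inv_nhdsGT_zero.comp (tendsto_nhdsWithin_iff.2 ⟨?_, ?_⟩)
    · have : ContinuousAt (fun v => v - w) w := by fun_prop
      simpa using this.tendsto.mono_left nhdsWithin_le_nhds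
    · filter_upwards [self_mem_nhdsWithin] with v hv
      simpa using hv
  have t2 : Tendsto (fun v => (9 * √3 + 11 * √2) / 6 * √(v ^ 3 - v) * v / (v - 1)) (𝓝[>] w)
      (𝓝 ((9 * √3 + 11 * √2) / 6 * √(w ^ 3 - w) * w / (w - 1))) := by
    have : ContinuousAt (fun v => (9 * √3 + 11 * √2) / 6 * √(v ^ 3 - v) * v / (v - 1)) w := by
      fun_prop (disch := exact hv1.ne')
    exact this.tendsto.mono_left nhdsWithin_le_nhds
  have t3 : Tendsto (fun v => paramNumer √2 √3 v / (√(v ^ 3 - v) + v * paramSlope √2 √3 v)) (𝓝[>] w)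
      (𝓝 (paramNumer √2 √3 w / (√(w ^ 3 - w) + w * paramSlope √2 √3 w))) := by
    have hd : √(w ^ 3 - w) + w * paramSlope √2 √3 w ≠ 0 := by positivity
    have : ContinuousAt (fun v =>
        paramNumer √2 √3 v / (√(v ^ 3 - v) + v * paramSlope √2 √3 v)) w := by
      unfold paramNumer paramSlope at *
      fun_prop (disch := exact hd)
    exact this.tendsto.mono_left nhdsWithin_le_nhds
  have t4 := (Real.tendsto_sqrt_atTop.comp (t2.pos_mul_atTop (by positivity) t1)).atTop_mul_neg
    (div_neg_of_neg_of_pos hr (by positivity)) t3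
  refine t4.congr fun v => ?_
  simp only [Function.comp, tanParam, hw]
  rw [← div_eq_mul_inv, div_div]
  exact (mul_div_assoc _ _ _).symm

open Filter Topology in
lemma tendsto_tanParam_atTop : Tendsto tanParam atTop atTop := by
  have h2 := sqrt_two_bounds
  have h3 := sqrt_three_bounds
  have h6 := sqrt_two_mul_sqrt_three_bounds
  have t : Tendsto (fun v : ℝ => √√(v - 1) * (1 / 8)) atTop atTop :=
    (Real.tendsto_sqrt_atTop.comp (Real.tendsto_sqrt_atTop.comp
      (tendsto_atTop_add_const_right _ (-1) tendsto_id))).atTop_mul_const (by norm_num)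
  refine tendsto_atTop_mono' _ ?_ t
  filter_upwards [eventually_ge_atTop 6] with v hv
  have h1 : 1 < v := by linarith
  have hX := sqrt_cubic_pos h1
  have hX2 := sq_sqrt_cubic h1
  have hvw : 2 * √3 / 3 < v := by linarith
  have hM := paramSlope_pos hvw.le
  have hw : 0 < v - 2 * √3 / 3 := by linarith
  have hv1 : 0 < v - 1 := by linarith
  have hM' : paramSlope √2 √3 v ≤ 3 * v := by unfold paramSlope; nlinarith
  have hXv : √(v ^ 3 - v) ≤ v ^ 2 := by
    refine Real.sqrt_le_iff.2 ⟨by positivity, ?_⟩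
    nlinarith [pow_pos (show 0 < v by linarith) 3]
  unfold tanParam
  rw [mul_div_assoc]
  refine mul_le_mul (Real.sqrt_le_sqrt ?_) ?_ (by norm_num) (Real.sqrt_nonneg _)
  · have hs : √(v - 1) * v ≤ √(v ^ 3 - v) := by
      refine Real.le_sqrt_of_sq_le ?_
      rw [mul_pow, Real.sq_sqrt hv1.le]
      nlinarith
    rw [le_div_iff₀ (by positivity)]
    calc √(v - 1) * ((v - 1) * (v - 2 * √3 / 3)) ≤ √(v - 1) * (v * v) := by
          gcongr <;> linarith
      _ = 1 * (√(v - 1) * v) * v := by ring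
      _ ≤ (9 * √3 + 11 * √2) / 6 * √(v ^ 3 - v) * v := by
          gcongr
          linarith
  · rw [le_div_iff₀ (by positivity)]
    unfold paramNumer
    nlinarith

lemma image_tanParam : tanParam '' Set.Ioi (2 * √3 / 3) = Set.univ :=
  Set.eq_univ_of_univ_subset <| isPreconnected_Ioi.intermediate_value_Iii
    (Filter.le_principal_iff.2 self_mem_nhdsWithin)
    (Filter.le_principal_iff.2 (Filter.Ioi_mem_atTop _))
    continuousOn_tanParam tendsto_tanParam_nhdsGT tendsto_tanParam_atTop

lemma image_arctan_tanParam :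
    (fun v => arctan (tanParam v)) '' Set.Ioi (2 * √3 / 3) = Set.Ioo (-(π / 2)) (π / 2) := by
  rw [← Set.image_image arctan, image_tanParam, Set.image_univ, range_arctan]

lemma one_sub_two_sqrt_two_div_three_bounds :
    0 < 1 - 2 * √2 / 3 ∧ 1 - 2 * √2 / 3 < 1 / 9 := by
  have h2 := sqrt_two_bounds
  constructor <;> linarith

lemma kernel_arctan (x : ℝ) :
    √(1 - 2 * (1 + 4 * sin (arctan x) ^ 2) * (1 - 2 * √2 / 3) +
      (1 - 4 * sin (arctan x) ^ 2) ^ 2 * (1 - 2 * √2 / 3) ^ 2) =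
      4 * (1 - 2 * √2 / 3) * √((17 + 12 * √2) / 2 + (12 + 9 * √2) * x ^ 2 +
        (9 + 6 * √2) / 2 * (x ^ 2) ^ 2) / (1 + x ^ 2) := by
  have hc := one_sub_two_sqrt_two_div_three_bounds.1
  have ha : √2 ^ 2 = 2 := Real.sq_sqrt (by norm_num)
  have hx : 0 < 1 + x ^ 2 := by positivity
  rw [sin_sq_arctan, Real.sqrt_eq_iff_mul_self_eq_of_pos (by positivity), ← pow_two, div_pow,
    mul_pow, Real.sq_sqrt (by positivity)]
  generalize x ^ 2 = s at *
  generalize √2 = a at *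
  field_simp
  have a3 : a ^ 3 = 2 * a := by rw [pow_succ, ha]
  ring_nf
  simp only [ha, a3]
  ring

lemma abs_deriv_tanParam {v : ℝ} (hv : 2 * √3 / 3 < v) :
    |deriv tanParam v| = √((8 - 6 * √2 + 6 * √3 - 4 * (√2 * √3)) / 16) *
      ((1 + (√2 + 2 * √3 / 3) / √(v ^ 3 - v)) / √((v - 2 * √3 / 3) * √(v ^ 3 - v))) *
      √((17 + 12 * √2) / 2 + (12 + 9 * √2) * tanParam v ^ 2 +
          (9 + 6 * √2) / 2 * (tanParam v ^ 2) ^ 2) := by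
  have h1 := one_lt_of_mem hv
  have hX := sqrt_cubic_pos h1
  have hw : 0 < v - 2 * √3 / 3 := by linarith
  have hK := paramConst_pos
  rw [← Real.sqrt_sq_eq_abs, Real.sqrt_eq_iff_mul_self_eq_of_pos (by
    have := sqrt_pos.2 (show 0 < (8 - 6 * √2 + 6 * √3 - 4 * (√2 * √3)) / 16 by positivity)
    have := sqrt_pos.2 (show 0 < (17 + 12 * √2) / 2 + (12 + 9 * √2) * tanParam v ^ 2 +
      (9 + 6 * √2) / 2 * (tanParam v ^ 2) ^ 2 by positivity)
    have := sqrt_pos.2 (mul_pos hw hX)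
    positivity), ← pow_two, mul_pow, mul_pow, div_pow, Real.sq_sqrt (by positivity),
    Real.sq_sqrt (by positivity), Real.sq_sqrt (by positivity)]
  have h := sq_deriv_tanParam hv
  rw [← eq_div_iff (by positivity)] at h
  rw [h]
  generalize √(v ^ 3 - v) = X at *
  generalize 2 * √3 / 3 = w at *
  field_simp

lemma setIntegral_kernel :
    ∫ t in Set.Ioo (-(π / 2)) (π / 2), 1 / √(1 - 2 * (1 + 4 * sin t ^ 2) * (1 - 2 * √2 / 3) +
      (1 - 4 * sin t ^ 2) ^ 2 * (1 - 2 * √2 / 3) ^ 2) =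
    √((8 - 6 * √2 + 6 * √3 - 4 * (√2 * √3)) / 16) / (4 * (1 - 2 * √2 / 3)) *
      ∫ v in Set.Ioi (2 / √3), (1 + (√2 + 2 * √3 / 3) / √(v ^ 3 - v)) /
        √((v - 2 / √3) * √(v ^ 3 - v)) := by
  have hw : 2 / √3 = 2 * √3 / 3 := by
    rw [div_eq_div_iff (by positivity) (by norm_num), mul_assoc, Real.mul_self_sqrt (by norm_num)]
  rw [hw, ← image_arctan_tanParam, MeasureTheory.integral_image_eq_integral_abs_deriv_smul
    (f' := fun v => 1 / (1 + tanParam v ^ 2) * deriv tanParam v) measurableSet_Ioi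
    (fun v hv => ((hasDerivAt_tanParam hv).differentiableAt.hasDerivAt.arctan).hasDerivWithinAt)
    (arctan_injective.comp_injOn injOn_tanParam), ← MeasureTheory.integral_const_mul]
  refine MeasureTheory.setIntegral_congr_fun measurableSet_Ioi fun v hv => ?_
  have hc := one_sub_two_sqrt_two_div_three_bounds.1
  have hs : 0 < √((17 + 12 * √2) / 2 + (12 + 9 * √2) * tanParam v ^ 2 +
      (9 + 6 * √2) / 2 * (tanParam v ^ 2) ^ 2) := Real.sqrt_pos.2 (by positivity)
  have hx : 0 < 1 + tanParam v ^ 2 := by positivity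
  simp only [smul_eq_mul]
  rw [kernel_arctan, abs_mul, abs_deriv_tanParam hv, abs_of_pos (by positivity)]
  generalize 1 + (√2 + 2 * √3 / 3) / √(v ^ 3 - v) = y at *
  generalize √((v - 2 * √3 / 3) * √(v ^ 3 - v)) = z at *
  generalize √((8 - 6 * √2 + 6 * √3 - 4 * (√2 * √3)) / 16) = K at *
  generalize 1 - 2 * √2 / 3 = c at *
  generalize √((17 + 12 * √2) / 2 + (12 + 9 * √2) * tanParam v ^ 2 +
      (9 + 6 * √2) / 2 * (tanParam v ^ 2) ^ 2) = S at *
  field_simp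

lemma sq_powSum_honeycomb_critical :
    (1 - 9 * (1 - 2 * √2 / 3) ^ 2) * powSum honeycomb (1 - 2 * √2 / 3) ^ 2 =
      √6 / (32 * π ^ 3) *
        (Gamma (1 / 24) * Gamma (5 / 24) * Gamma (7 / 24) * Gamma (11 / 24)) := by
  obtain ⟨hc0, hc1⟩ := one_sub_two_sqrt_two_div_three_bounds
  have hI := sq_setIntegral_cubic
  have h := powSum_honeycomb_eq_setIntegral hc0.le hc1
  rw [setIntegral_kernel] at h
  have hK := Real.sq_sqrt (show 0 ≤ (8 - 6 * √2 + 6 * √3 - 4 * (√2 * √3)) / 16 from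
    (div_pos paramConst_pos (by norm_num)).le)
  have ha : √2 ^ 2 = 2 := Real.sq_sqrt (by norm_num)
  have hb : √3 ^ 2 = 3 := Real.sq_sqrt (by norm_num)
  have h6 : √6 = √2 * √3 := by rw [← Real.sqrt_mul (by norm_num)]; norm_num
  have hpi := pi_pos
  have ha0 : 0 < √2 := by positivity
  have h2 : powSum honeycomb (1 - 2 * √2 / 3) ^ 2 = (8 - 6 * √2 + 6 * √3 - 4 * (√2 * √3)) / 16 /
      (4 * (1 - 2 * √2 / 3)) ^ 2 * ((√2 + 2 * √3 / 3) / (3 * √2 * π) *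
        (Gamma (1 / 24) * Gamma (5 / 24) * Gamma (7 / 24) * Gamma (11 / 24))) / π ^ 2 := by
    rw [← hI, ← hK, eq_div_iff (by positivity), ← mul_pow, mul_comm _ π, h, mul_pow, div_pow]
  have h3 : (1 - 9 * (1 - 2 * √2 / 3) ^ 2) * ((8 - 6 * √2 + 6 * √3 - 4 * (√2 * √3)) / 16) *
      (√2 + 2 * √3 / 3) = √6 / 32 * (4 * (1 - 2 * √2 / 3)) ^ 2 * (3 * √2) := by
    rw [h6]
    generalize √2 = a at *
    generalize √3 = b at *
    have a3 : a ^ 3 = 2 * a := by rw [pow_succ, ha]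
    have a4 : a ^ 4 = 4 := by rw [show a ^ 4 = (a ^ 2) ^ 2 by ring, ha]; norm_num
    ring_nf
    simp only [ha, hb, a3, a4]
    ring
  rw [h2]
  trans (1 - 9 * (1 - 2 * √2 / 3) ^ 2) * ((8 - 6 * √2 + 6 * √3 - 4 * (√2 * √3)) / 16) *
      (√2 + 2 * √3 / 3) * (Gamma (1 / 24) * Gamma (5 / 24) * Gamma (7 / 24) * Gamma (11 / 24)) /
      ((4 * (1 - 2 * √2 / 3)) ^ 2 * (3 * √2) * π ^ 3)
  · generalize 4 * (1 - 2 * √2 / 3) = c at *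
    generalize 3 * √2 = d at *
    field_simp
  · rw [h3]
    generalize 1 - 2 * √2 / 3 = c at *
    field_simp

/-- The reduction formula
`F_C^{(3)}(1, 1/2; 1, 1, 1; 1/9, 1/9, 1/9) = (√6/(32π³)) Γ(1/24) Γ(5/24) Γ(7/24) Γ(11/24)`. -/
theorem lauricellaFC_three_reduction :
    (∑' k : Fin 3 → ℕ,
        (ascPochhammer ℝ (∑ j, k j)).eval 1 * (ascPochhammer ℝ (∑ j, k j)).eval (1 / 2) /
          ((∏ j, ((k j).factorial : ℝ) ^ 2) * (9 : ℝ) ^ (∑ j, k j))) =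
      Real.sqrt 6 / (32 * Real.pi ^ 3) *
        (Real.Gamma (1 / 24) * Real.Gamma (5 / 24) * Real.Gamma (7 / 24) *
          Real.Gamma (11 / 24)) := by
  have h := hasSum_sunrise_critical
  rw [tsum_lauricella_eq h.summable, ← sq_powSum_honeycomb_critical]
  exact h.tsum_eq
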